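/- Let N ≥ 3 be odd. Let u₀ ∈ C_c^∞(ℝ^N) with supp u₀ ⊆ {|x| ≤ 1}, and let u : ℝ × ℝ^N → ℝ be a smooth solution of the linear wave equation ∂_t²u = Δ_x u with u(0,·) = u₀ and ∂_t u(0,·) = 0. Define Ext(t) = (1/2)∫_{|x| ≥ |t|} (|∇_x u(t,x)|² + (∂_t u(t,x))²) dx. Then Ext(t) → (1/4)∫_{ℝ^N}|∇u₀|² dx as t → +∞ and also as t → −∞. -/

import Mathlib

open MeasureTheory Metric Filter Set

noncomputable section

/-- The ground state `W(x) = (1 + |x|²/(N(N-2)))^(-(N-2)/2)`. -/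
def W (N : ℕ) (x : EuclideanSpace ℝ (Fin N)) : ℝ :=
  (1 + ‖x‖ ^ 2 / ((N : ℝ) * ((N : ℝ) - 2))) ^ (-(((N : ℝ) - 2) / 2))

/-- The energy `E(v₀,v₁)`. -/
def energy (N : ℕ) (v₀ v₁ : EuclideanSpace ℝ (Fin N) → ℝ) : ℝ :=
  (1 / 2) * (∫ x, v₁ x ^ 2)
    + (1 / 2) * (∫ x, ‖gradient v₀ x‖ ^ 2)
    - ((N : ℝ) - 2) / (2 * (N : ℝ)) * (∫ x, |v₀ x| ^ (2 * (N : ℝ) / ((N : ℝ) - 2)))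

/-- The first coordinate of a point of `ℝ^N`. -/
def firstCoord {N : ℕ} (x : EuclideanSpace ℝ (Fin N)) : ℝ :=
  if h : 0 < N then x ⟨0, h⟩ else 0

/-- The Lorentz-transformed ground state `W_ℓ(t,x)`; the sum `x₂² + ⋯ + x_N²` is written
as `‖x‖² - x₁²`. -/
def Wl (N : ℕ) (ℓ : ℝ) (t : ℝ) (x : EuclideanSpace ℝ (Fin N)) : ℝ :=
  (1 + (firstCoord x - t * ℓ) ^ 2 / ((N : ℝ) * ((N : ℝ) - 2) * (1 - ℓ ^ 2))
     + (‖x‖ ^ 2 - firstCoord x ^ 2) / ((N : ℝ) * ((N : ℝ) - 2))) ^ (-(((N : ℝ) - 2) / 2))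

/-- The time derivative `∂ₜ W_ℓ(t,x)`. -/
def dtWl (N : ℕ) (ℓ : ℝ) (t : ℝ) (x : EuclideanSpace ℝ (Fin N)) : ℝ :=
  deriv (fun s => Wl N ℓ s x) t

/-- The second partial derivative `∂²f/∂xⱼ²` at `x`. -/
def d2 {N : ℕ} (f : EuclideanSpace ℝ (Fin N) → ℝ) (j : Fin N)
    (x : EuclideanSpace ℝ (Fin N)) : ℝ :=
  fderiv ℝ (fun y => fderiv ℝ f y (EuclideanSpace.single j 1)) x (EuclideanSpace.single j 1)


abbrev Eu (N : ℕ) := EuclideanSpace ℝ (Fin N)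

lemma aux_param {X H : Type*} [TopologicalSpace X] [MeasurableSpace X] [BorelSpace X]
    [SecondCountableTopology X] [T2Space X]
    (μ : Measure X) [IsFiniteMeasureOnCompacts μ]
    [NormedAddCommGroup H] [NormedSpace ℝ H] [FiniteDimensional ℝ H]
    (F : H → X → ℝ) (F' : H → X → H →L[ℝ] ℝ)
    (hF : Continuous (Function.uncurry F)) (hF' : Continuous (Function.uncurry F'))
    (hd : ∀ h x, HasFDerivAt (fun h => F h x) (F' h x) h)
    {K : Set X} (hK : IsCompact K) (h₀ : H) :
    HasFDerivAt (fun h => ∫ x in K, F h x ∂μ) (∫ x in K, F' h₀ x ∂μ) h₀ := by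
  have : ProperSpace H := FiniteDimensional.proper_real H
  obtain ⟨s, hs, hsn⟩ := exists_compact_mem_nhds h₀
  obtain ⟨C, hC⟩ := ((hs.prod hK).image hF'.norm).bddAbove
  have hfin : IsFiniteMeasure (μ.restrict K) := ⟨by simpa using hK.measure_lt_top⟩
  have cF : ∀ h, Continuous (F h) := fun h => hF.comp (by fun_prop : Continuous fun x => (h, x))
  have cF' : ∀ h, Continuous (F' h) := fun h => hF'.comp (by fun_prop : Continuous fun x => (h, x))
  refine hasFDerivAt_integral_of_dominated_of_fderiv_le (bound := fun _ => C) hsn ?_ ?_ ?_ ?_ ?_ ?_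
  · exact Eventually.of_forall fun h => ((cF h).continuousOn.aestronglyMeasurable hK.measurableSet)
  · exact (cF h₀).continuousOn.integrableOn_compact hK
  · exact ((cF' h₀).continuousOn.aestronglyMeasurable hK.measurableSet)
  · filter_upwards [ae_restrict_mem hK.measurableSet] with x hx h hh
    exact hC ⟨(h, x), ⟨hh, hx⟩, rfl⟩
  · exact integrable_const _
  · exact Eventually.of_forall fun x h _ => hd h x

lemma aux_div {E : Type*} [NormedAddCommGroup E] [NormedSpace ℝ E] [FiniteDimensional ℝ E]
    [MeasurableSpace E] [BorelSpace E] (μ : Measure E) [μ.IsAddHaarMeasure]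
    (Φ : E → ℝ) (h : ContDiff ℝ 1 Φ) (hc : HasCompactSupport Φ) (v : E) :
    ∫ x, fderiv ℝ Φ x v ∂μ = 0 := by
  have h1 : Continuous (fun x => fderiv ℝ Φ x v) := (h.continuous_fderiv (by simp)).clm_apply continuous_const
  have h2 : HasCompactSupport (fun x => fderiv ℝ Φ x v) := hc.fderiv_apply (𝕜 := ℝ) v
  have := integral_mul_fderiv_eq_neg_fderiv_mul_of_integrable (μ := μ) (𝕜 := ℝ) (f := fun _ => (1:ℝ))
    (g := Φ) (v := v) (by simp) (by simpa using h1.integrable_of_hasCompactSupport h2)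
    (by simpa using h.continuous.integrable_of_hasCompactSupport hc)
    (fun x _ => by fun_prop) (fun x _ => (h.differentiable (by simp)) x)
  simpa using this

def etaf (s : ℝ) : ℝ := (max s 0) ^ 2

lemma etaf_hasDerivAt (s : ℝ) : HasDerivAt etaf (2 * max s 0) s := by
  rcases lt_trichotomy s 0 with h | h | h
  · have : etaf =ᶠ[nhds s] fun _ => 0 := by
      filter_upwards [gt_mem_nhds h] with y hy
      simp [etaf, max_eq_right hy.le]
    rw [max_eq_right h.le]
    simpa using (hasDerivAt_const s (0:ℝ)).congr_of_eventuallyEq this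
  · subst h
    rw [hasDerivAt_iff_isLittleO]
    have h1 : (fun x' : ℝ => etaf x' - etaf 0 - (x' - 0) • (2 * max (0:ℝ) 0)) =O[nhds 0] fun x => x ^ 2 := by
      refine Asymptotics.IsBigO.of_bound 1 (Eventually.of_forall fun x => ?_)
      simp only [etaf]
      rcases le_total x 0 with hx | hx
      · simp [max_eq_right hx]; positivity
      · simp [max_eq_left hx]
    refine h1.trans_isLittleO ?_
    simpa using Asymptotics.isLittleO_pow_id (𝕜 := ℝ) (n := 2) (by norm_num)
  · have : etaf =ᶠ[nhds s] fun x => x ^ 2 := by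
      filter_upwards [lt_mem_nhds h] with y hy
      simp [etaf, max_eq_left hy.le]
    rw [max_eq_left h.le]
    simpa using (hasDerivAt_pow 2 s).congr_of_eventuallyEq this

lemma etaf_contDiff : ContDiff ℝ 1 etaf := by
  rw [contDiff_one_iff_deriv]
  refine ⟨fun s => (etaf_hasDerivAt s).differentiableAt, ?_⟩
  have : deriv etaf = fun s => 2 * max s 0 := funext fun s => (etaf_hasDerivAt s).deriv
  rw [this]; fun_prop

lemma aux_fderiv_snd {E : Type*} [NormedAddCommGroup E] [NormedSpace ℝ E]
    (Ψ : ℝ × E → ℝ) (h : ContDiff ℝ 1 Ψ) (t : ℝ) (x v : E) :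
    fderiv ℝ (fun x => Ψ (t, x)) x v = fderiv ℝ Ψ (t, x) (0, v) := by
  have h1 : HasFDerivAt (fun x : E => (t, x)) ((0 : E →L[ℝ] ℝ).prod (ContinuousLinearMap.id ℝ E)) x :=
    (hasFDerivAt_const t x).prodMk (hasFDerivAt_id x)
  have := ((h.differentiable (by simp)) (t, x)).hasFDerivAt.comp x h1
  rw [show (fun x => Ψ (t, x)) = Ψ ∘ (fun x => (t, x)) from rfl, this.fderiv]
  simp

lemma aux_hasDeriv_fst {E : Type*} [NormedAddCommGroup E] [NormedSpace ℝ E]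
    (Ψ : ℝ × E → ℝ) (h : ContDiff ℝ 1 Ψ) (t : ℝ) (x : E) :
    HasDerivAt (fun t => Ψ (t, x)) (fderiv ℝ Ψ (t, x) (1, 0)) t := by
  have h1 : HasDerivAt (fun t : ℝ => (t, x)) ((1:ℝ), (0:E)) t :=
    (hasDerivAt_id t).prodMk (hasDerivAt_const t x)
  exact ((h.differentiable (by simp)) (t, x)).hasFDerivAt.comp_hasDerivAt t h1

def chif {E : Type*} [NormedAddCommGroup E] (R : ℝ) (p : ℝ × E) : ℝ :=
  etaf (R - p.1 - √(1 + ‖p.2‖ ^ 2))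

lemma chif_contDiff {E : Type*} [NormedAddCommGroup E] [InnerProductSpace ℝ E] (R : ℝ) :
    ContDiff ℝ 1 (chif (E := E) R) := by
  unfold chif
  refine etaf_contDiff.comp ?_
  refine (contDiff_const.sub contDiff_fst).sub ?_
  refine ContDiff.sqrt ?_ (fun x => by positivity)
  exact contDiff_const.add (contDiff_snd.norm_sq ℝ)

lemma chif_fderiv {E : Type*} [NormedAddCommGroup E] [InnerProductSpace ℝ E] (R : ℝ) (p : ℝ × E)
    (v : ℝ × E) :
    fderiv ℝ (chif (E := E) R) p v =
      (2 * max (R - p.1 - √(1 + ‖p.2‖ ^ 2)) 0) * (- v.1 - inner ℝ p.2 v.2 / √(1 + ‖p.2‖ ^ 2)) := by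
  have h1 : HasFDerivAt (fun p : ℝ × E => 1 + ‖p.2‖ ^ 2)
      ((2 • (innerSL ℝ p.2)).comp (ContinuousLinearMap.snd ℝ ℝ E)) p := by
    have := (hasStrictFDerivAt_norm_sq (F := E) p.2).hasFDerivAt.comp p
      (ContinuousLinearMap.snd ℝ ℝ E).hasFDerivAt
    exact this.const_add 1
  have hpos : 1 + ‖p.2‖ ^ 2 ≠ 0 := by positivity
  have h2 := h1.sqrt hpos
  have h3 : HasFDerivAt (fun p : ℝ × E => R - p.1 - √(1 + ‖p.2‖ ^ 2)) _ p :=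
    ((ContinuousLinearMap.fst ℝ ℝ E).hasFDerivAt.const_sub R).sub h2
  have h4 := (etaf_hasDerivAt (R - p.1 - √(1 + ‖p.2‖ ^ 2))).comp_hasFDerivAt p h3
  have : chif (E := E) R = etaf ∘ (fun p : ℝ × E => R - p.1 - √(1 + ‖p.2‖ ^ 2)) := rfl
  rw [this, h4.fderiv]
  have : √(1 + ‖p.2‖ ^ 2) ≠ 0 := by positivity
  simp
  left
  field_simp

lemma chif_zero {E : Type*} [NormedAddCommGroup E] (R : ℝ) (p : ℝ × E) (h : R - p.1 ≤ ‖p.2‖) :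
    max (R - p.1 - √(1 + ‖p.2‖ ^ 2)) 0 = 0 := by
  have : ‖p.2‖ ≤ √(1 + ‖p.2‖ ^ 2) := Real.le_sqrt_of_sq_le (by linarith)
  exact max_eq_right (by linarith)


/-- First-order wave system. -/
structure WSys {N : ℕ} (a : ℝ × Eu N → ℝ)
    (g : Fin N → ℝ × Eu N → ℝ) : Prop where
  ca : ContDiff ℝ 1 a
  cg : ∀ j, ContDiff ℝ 1 (g j)
  ha : ∀ p, fderiv ℝ a p (1, 0) = ∑ j, fderiv ℝ (g j) p (0, EuclideanSpace.single j 1)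
  hg : ∀ p j, fderiv ℝ (g j) p (1, 0) = fderiv ℝ a p (0, EuclideanSpace.single j 1)

lemma wsys_local_energy {N : ℕ} {a : ℝ × Eu N → ℝ}
    {g : Fin N → ℝ × Eu N → ℝ} (h : WSys a g) (R : ℝ) (T : ℝ) (hT : 0 ≤ T) :
    ∫ x, chif R (T, x) * (a (T, x) ^ 2 + ∑ j, g j (T, x) ^ 2) ≤
    ∫ x, chif R ((0:ℝ), x) * (a (0, x) ^ 2 + ∑ j, g j (0, x) ^ 2) := by
  set q : ℝ × Eu N → ℝ := fun p => a p ^ 2 + ∑ j, g j p ^ 2 with hq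
  have cq : ContDiff ℝ 1 q := (h.ca.pow 2).add (ContDiff.sum fun j _ => (h.cg j).pow 2)
  set Ψ : ℝ × Eu N → ℝ := fun p => chif R p * q p with hΨ
  have cχ := chif_contDiff (E := Eu N) R
  have cΨ : ContDiff ℝ 1 Ψ := cχ.mul cq
  set K : Set (Eu N) := closedBall 0 (R + 1)
  have hK : IsCompact K := isCompact_closedBall _ _
  have da : ∀ p, HasFDerivAt a (fderiv ℝ a p) p := fun p => ((h.ca.differentiable (by simp)) p).hasFDerivAt
  have dg : ∀ j p, HasFDerivAt (g j) (fderiv ℝ (g j) p) p :=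
    fun j p => (((h.cg j).differentiable (by simp)) p).hasFDerivAt
  have dχ : ∀ p, HasFDerivAt (chif (E := Eu N) R) (fderiv ℝ (chif R) p) p :=
    fun p => ((cχ.differentiable (by simp)) p).hasFDerivAt
  have dq : ∀ p v, fderiv ℝ q p v = 2 * a p * fderiv ℝ a p v + ∑ j, 2 * g j p * fderiv ℝ (g j) p v := by
    intro p v
    have : HasFDerivAt q _ p := ((da p).pow 2).add (HasFDerivAt.fun_sum (u := Finset.univ) fun j _ => (dg j p).pow 2)
    rw [this.fderiv]
    simp
  have dΨ : ∀ p v, fderiv ℝ Ψ p v = fderiv ℝ (chif R) p v * q p + chif R p * fderiv ℝ q p v := by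
    intro p v
    have : HasFDerivAt Ψ _ p := (dχ p).mul ((cq.differentiable (by simp)) p).hasFDerivAt
    rw [this.fderiv]
    simp; ring
  have zχ : ∀ t x, -1 < t → x ∉ K → chif R ((t:ℝ), (x:Eu N)) = 0 := by
    intro t x ht hx
    have hx' : R + 1 < ‖x‖ := by simpa [K] using hx
    have := chif_zero R (t, x) (by simp; linarith)
    simp only [chif, etaf, this]; simp
  have zχ' : ∀ t x v, -1 < t → x ∉ K → fderiv ℝ (chif R) ((t:ℝ), (x:Eu N)) v = 0 := by
    intro t x v ht hx
    have hx' : R + 1 < ‖x‖ := by simpa [K] using hx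
    rw [chif_fderiv, chif_zero R (t, x) (by simp; linarith)]; simp
  set I : ℝ → ℝ := fun t => ∫ x in K, Ψ (t, x) with hI
  have hIeq : ∀ t, -1 < t → ∫ x, Ψ (t, x) = I t := by
    intro t ht
    rw [hI]
    refine (setIntegral_eq_integral_of_forall_compl_eq_zero fun x hx => ?_).symm
    simp [hΨ, zχ t x ht hx]
  have hI' : ∀ t, HasDerivAt I (∫ x in K, fderiv ℝ Ψ (t, x) (1, 0)) t := by
    intro t
    have c1 : Continuous fun p : ℝ × Eu N => fderiv ℝ Ψ p (1, 0) :=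
      (cΨ.continuous_fderiv (by simp)).clm_apply continuous_const
    have := aux_param (volume : Measure (Eu N)) (H := ℝ) (fun t x => Ψ (t, x))
      (fun t x => ContinuousLinearMap.toSpanSingleton ℝ (fderiv ℝ Ψ (t, x) (1, 0)))
      cΨ.continuous ?_ ?_ hK t
    · have h2 := this.hasDerivAt
      rw [ContinuousLinearMap.integral_apply] at h2
      · simpa using h2
      · refine ContinuousOn.integrableOn_compact hK (Continuous.continuousOn ?_)
        have : Continuous fun s : ℝ => ContinuousLinearMap.toSpanSingleton ℝ s :=
          (ContinuousLinearMap.toSpanSingletonCLE (𝕜 := ℝ) (E := ℝ)).continuous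
        exact this.comp (c1.comp (by fun_prop))
    · have : Continuous fun s : ℝ => ContinuousLinearMap.toSpanSingleton ℝ s :=
          (ContinuousLinearMap.toSpanSingletonCLE (𝕜 := ℝ) (E := ℝ)).continuous
      exact this.comp c1
    · intro t x
      exact (aux_hasDeriv_fst Ψ cΨ t x).hasFDerivAt
  have hneg : ∀ t, -1 < t → ∫ x in K, fderiv ℝ Ψ (t, x) (1, 0) ≤ 0 := by
    intro t ht
    -- divergence
    have hdiv : ∀ j, ∫ x in K, fderiv ℝ (fun p : ℝ × Eu N => chif R p * (a p * g j p)) (t, x)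
        (0, EuclideanSpace.single j 1) = 0 := by
      intro j
      have c : ContDiff ℝ 1 (fun p : ℝ × Eu N => chif R p * (a p * g j p)) := cχ.mul (h.ca.mul (h.cg j))
      have c' : ContDiff ℝ 1 (fun x : Eu N => chif R (t, x) * (a (t, x) * g j (t, x))) :=
        c.comp (contDiff_const.prodMk contDiff_id)
      have hs : HasCompactSupport (fun x : Eu N => chif R (t, x) * (a (t, x) * g j (t, x))) :=
        HasCompactSupport.intro hK fun x hx => by simp [zχ t x ht hx]
      have hd0 := aux_div (volume : Measure (Eu N)) _ c' hs (EuclideanSpace.single j 1)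
      have h2 : ∀ x, fderiv ℝ (fun x : Eu N => chif R (t, x) * (a (t, x) * g j (t, x))) x
          (EuclideanSpace.single j 1) = fderiv ℝ (fun p : ℝ × Eu N => chif R p * (a p * g j p)) (t, x)
        (0, EuclideanSpace.single j 1) := fun x => aux_fderiv_snd _ c t x _
      simp_rw [h2] at hd0
      refine Eq.trans ?_ hd0
      apply setIntegral_eq_integral_of_forall_compl_eq_zero
      intro x hx
      have : HasFDerivAt (fun p : ℝ × Eu N => chif R p * (a p * g j p)) _ (t, x) :=
        (dχ (t, x)).mul ((da (t, x)).mul (dg j (t, x)))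
      rw [this.fderiv]
      simp [zχ t x ht hx, zχ' t x _ ht hx]
    have cj : ∀ j, ContDiff ℝ 1 (fun p : ℝ × Eu N => chif R p * (a p * g j p)) :=
      fun j => cχ.mul (h.ca.mul (h.cg j))
    have intj : ∀ j, IntegrableOn (fun x => fderiv ℝ (fun p : ℝ × Eu N => chif R p * (a p * g j p)) (t, x)
        (0, EuclideanSpace.single j 1)) K := by
      intro j
      refine ContinuousOn.integrableOn_compact hK (Continuous.continuousOn ?_)
      exact (((cj j).continuous_fderiv (by simp)).comp (by fun_prop)).clm_apply continuous_const
    have intΨ : IntegrableOn (fun x => fderiv ℝ Ψ (t, x) (1, 0)) K := by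
      refine ContinuousOn.integrableOn_compact hK (Continuous.continuousOn ?_)
      exact ((cΨ.continuous_fderiv (by simp)).comp (by fun_prop)).clm_apply continuous_const
    have key : ∫ x in K, fderiv ℝ Ψ (t, x) (1, 0) = ∫ x in K, (fderiv ℝ Ψ (t, x) (1, 0) -
        2 * ∑ j, fderiv ℝ (fun p : ℝ × Eu N => chif R p * (a p * g j p)) (t, x)
        (0, EuclideanSpace.single j 1)) := by
      rw [integral_sub intΨ ((integrable_finsetSum _ fun j _ => intj j).const_mul 2),
        integral_const_mul, integral_finsetSum _ fun j _ => intj j]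
      simp [hdiv]
    rw [key]
    refine integral_nonpos fun x => ?_
    have e1 : ∀ j v, fderiv ℝ (fun p : ℝ × Eu N => chif R p * (a p * g j p)) (t, x) v =
        fderiv ℝ (chif R) (t, x) v * (a (t, x) * g j (t, x)) + chif R (t, x) *
          (fderiv ℝ a (t, x) v * g j (t, x) + a (t, x) * fderiv ℝ (g j) (t, x) v) := by
      intro j v
      have : HasFDerivAt (fun p : ℝ × Eu N => chif R p * (a p * g j p)) _ (t, x) :=
        (dχ (t, x)).mul ((da (t, x)).mul (dg j (t, x)))
      rw [this.fderiv]
      simp; ring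
    simp_rw [e1, dΨ, dq, h.ha, h.hg]
    set α := a (t, x)
    set γ : Fin N → ℝ := fun j => g j (t, x) with hγ
    have e2 : fderiv ℝ (chif R) (t, x) (1, 0) * q (t, x) - 2 * ∑ j, fderiv ℝ (chif R) (t, x)
       (0, EuclideanSpace.single j 1) * (α * γ j) ≤ 0 := by
      simp_rw [chif_fderiv]
      simp only [inner_zero_right]
      set m := 2 * max (R - t - √(1 + ‖x‖ ^ 2)) 0 with hm
      have hm0 : 0 ≤ m := by positivity
      set w := √(1 + ‖x‖ ^ 2) with hw
      have hw0 : 0 < w := by positivity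
      have hw2 : w ^ 2 = 1 + ‖x‖ ^ 2 := Real.sq_sqrt (by positivity)
      have e3 : ∀ j : Fin N, inner ℝ x (EuclideanSpace.single j (1:ℝ)) = x j := by
        intro j; simp [EuclideanSpace.inner_single_right]
      simp_rw [e3]
      have e4 : ∑ j, m * (-0 - x j / w) * (α * γ j) = - m * (α * ((∑ j, x j * γ j) / w)) := by
        rw [Finset.sum_div, Finset.mul_sum, Finset.mul_sum]
        refine Finset.sum_congr rfl fun j _ => ?_
        ring
      rw [e4]
      have e5 : (∑ j, x j * γ j) ^ 2 ≤ (∑ j, x j ^ 2) * ∑ j, γ j ^ 2 := Finset.sum_mul_sq_le_sq_mul_sq _ _ _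
      have e6 : ∑ j, x j ^ 2 = ‖x‖ ^ 2 := by rw [EuclideanSpace.norm_sq_eq]; simp
      have hγ0 : 0 ≤ ∑ j, γ j ^ 2 := Finset.sum_nonneg fun _ _ => sq_nonneg _
      have e7 : ((∑ j, x j * γ j) / w) ^ 2 ≤ ∑ j, γ j ^ 2 := by
        rw [div_pow, div_le_iff₀ (by positivity), hw2]
        rw [e6] at e5
        nlinarith
      have hqx : q (t, x) = α ^ 2 + ∑ j, γ j ^ 2 := rfl
      rw [hqx]
      set y := (∑ j, x j * γ j) / w
      have : 0 ≤ (α - y) ^ 2 := sq_nonneg _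
      have h8 : 2 * (α * y) ≤ α ^ 2 + ∑ j, γ j ^ 2 := by nlinarith
      have h9 := mul_le_mul_of_nonneg_left h8 hm0
      rw [zero_div]
      linarith
    have e9 : (fderiv ℝ (chif R) (t, x) (1, 0) * q (t, x) +
        chif R (t, x) * (2 * α * (∑ j, fderiv ℝ (g j) (t, x) (0, EuclideanSpace.single j 1)) +
          ∑ j, 2 * γ j * fderiv ℝ a (t, x) (0, EuclideanSpace.single j 1))) -
        2 * ∑ j, (fderiv ℝ (chif R) (t, x) (0, EuclideanSpace.single j 1) * (α * γ j) +
          chif R (t, x) * (fderiv ℝ a (t, x) (0, EuclideanSpace.single j 1) * γ j +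
            α * fderiv ℝ (g j) (t, x) (0, EuclideanSpace.single j 1))) =
        fderiv ℝ (chif R) (t, x) (1, 0) * q (t, x) - 2 * ∑ j, fderiv ℝ (chif R) (t, x)
          (0, EuclideanSpace.single j 1) * (α * γ j) := by
      simp only [Finset.mul_sum, Finset.sum_add_distrib, mul_add, Finset.sum_mul]
      have s1 : ∀ j, chif R (t, x) * (2 * γ j * fderiv ℝ a (t, x) (0, EuclideanSpace.single j 1)) =
        2 * (chif R (t, x) * (fderiv ℝ a (t, x) (0, EuclideanSpace.single j 1) * γ j)) := fun j => by ring
      have s2 : ∀ j, chif R (t, x) * (2 * α * fderiv ℝ (g j) (t, x) (0, EuclideanSpace.single j 1)) =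
        2 * (chif R (t, x) * (α * fderiv ℝ (g j) (t, x) (0, EuclideanSpace.single j 1))) := fun j => by ring
      simp_rw [s1, s2]
      ring
    exact (le_of_eq e9).trans e2
  have hanti : AntitoneOn I (Ici 0) := by
    refine antitoneOn_of_deriv_nonpos (convex_Ici 0) (fun t _ => (hI' t).continuousAt.continuousWithinAt)
      (fun t _ => (hI' t).differentiableAt.differentiableWithinAt) fun t ht => ?_
    rw [(hI' t).deriv]
    refine hneg t ?_
    simp at ht; linarith
  have := hanti (mem_Ici.2 le_rfl) (mem_Ici.2 hT) hT
  rw [← hIeq T (by linarith), ← hIeq 0 (by norm_num)] at this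
  exact this

lemma wsys_zero {N : ℕ} {a : ℝ × Eu N → ℝ}
    {g : Fin N → ℝ × Eu N → ℝ} (h : WSys a g)
    (ha0 : ∀ x, a (0, x) = 0) (hg0 : ∀ j x, g j (0, x) = 0) (t : ℝ) (ht : 0 ≤ t)
    (x : Eu N) : a (t, x) = 0 ∧ ∀ j, g j (t, x) = 0 := by
  set R := t + √(1 + ‖x‖ ^ 2) + 1
  have h1 := wsys_local_energy h R t ht
  simp only [ha0, hg0] at h1
  simp only [ne_eq, OfNat.ofNat_ne_zero, not_false_eq_true, zero_pow, Finset.sum_const_zero,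
    add_zero, mul_zero, integral_zero] at h1
  set Φ : Eu N → ℝ := fun x => chif R (t, x) * (a (t, x) ^ 2 + ∑ j, g j (t, x) ^ 2)
  have hc : Continuous Φ := by
    have := (chif_contDiff (E := Eu N) R).continuous
    have := h.ca.continuous
    have := fun j => (h.cg j).continuous
    simp only [Φ]
    fun_prop
  have h0 : 0 ≤ Φ := fun y => by
    simp only [Φ, chif, etaf]; positivity
  have hs : HasCompactSupport Φ := by
    refine HasCompactSupport.intro (isCompact_closedBall 0 (R - t)) fun y hy => ?_
    have hy' : R - t < ‖y‖ := by simpa using hy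
    simp only [Φ, chif, etaf]
    rw [chif_zero R (t, y) (by simpa using hy'.le)]; simp
  have hz : ∫ x, Φ x = 0 := le_antisymm h1 (integral_nonneg h0)
  rw [integral_eq_zero_iff_of_nonneg h0 (hc.integrable_of_hasCompactSupport hs), Continuous.ae_eq_iff_eq volume hc continuous_zero] at hz
  have hx := congrFun hz x
  have hχ : chif R (t, x) = 1 := by
    simp only [chif, etaf, R]
    rw [show t + √(1 + ‖x‖ ^ 2) + 1 - t - √(1 + ‖x‖ ^ 2) = 1 by ring]; simp
  simp only [Φ, hχ, one_mul, Pi.zero_apply] at hx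
  have hs0 : 0 ≤ ∑ j, g j (t, x) ^ 2 := Finset.sum_nonneg fun _ _ => sq_nonneg _
  have ha2 : a (t, x) ^ 2 = 0 := by nlinarith [sq_nonneg (a (t, x))]
  have hg2 : ∑ j, g j (t, x) ^ 2 = 0 := by nlinarith [sq_nonneg (a (t, x))]
  refine ⟨by simpa using ha2, fun j => ?_⟩
  rw [Finset.sum_eq_zero_iff_of_nonneg (fun _ _ => sq_nonneg _)] at hg2
  simpa using hg2 j (Finset.mem_univ j)

lemma wsys_energy {N : ℕ} {a : ℝ × Eu N → ℝ}
    {g : Fin N → ℝ × Eu N → ℝ} (h : WSys a g) (t : ℝ) (ht : 0 ≤ t)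
    (hinteg : Integrable fun x => a (0, x) ^ 2 + ∑ j, g j (0, x) ^ 2) :
    Integrable (fun x => a (t, x) ^ 2 + ∑ j, g j (t, x) ^ 2) ∧
    ∫ x, (a (t, x) ^ 2 + ∑ j, g j (t, x) ^ 2) ≤ ∫ x, (a (0, x) ^ 2 + ∑ j, g j (0, x) ^ 2) := by
  set e : ℝ → Eu N → ℝ := fun t x => a (t, x) ^ 2 + ∑ j, g j (t, x) ^ 2 with he
  have ce : ∀ t, Continuous (e t) := by
    intro t
    have := h.ca.continuous
    have := fun j => (h.cg j).continuous
    simp only [he]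
    fun_prop
  have e0 : ∀ t x, 0 ≤ e t x := fun t x => by simp only [he]; positivity
  have cχ : ∀ R, Continuous (chif (E := Eu N) R) := fun R => (chif_contDiff R).continuous
  set M := ∫ x, e 0 x
  -- truncated functions
  set f : ℕ → Eu N → ℝ := fun n x => (chif ((n:ℝ) + 1) (t, x) / ((n:ℝ) + 1) ^ 2) * e t x with hf
  have f0 : ∀ n x, 0 ≤ f n x := fun n x => by
    have := e0 t x
    simp only [hf, chif, etaf]; positivity
  have hfc : ∀ n, Continuous (f n) := fun n => by
    have := cχ ((n:ℝ) + 1)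
    have := ce t
    simp only [hf]; fun_prop
  have hfs : ∀ n, HasCompactSupport (f n) := fun n => by
    refine HasCompactSupport.intro (isCompact_closedBall 0 ((n:ℝ) + 1 - t)) fun y hy => ?_
    have hy' : (n:ℝ) + 1 - t < ‖y‖ := by simpa using hy
    simp only [hf, chif, etaf]
    rw [chif_zero _ (t, y) (by simpa using hy'.le)]; simp
  have hfi : ∀ n, ∫ x, f n x ≤ M := by
    intro n
    have h1 := wsys_local_energy h ((n:ℝ) + 1) t ht
    have h2 : ∫ x, f n x = (1 / ((n:ℝ) + 1) ^ 2) * ∫ x, chif ((n:ℝ) + 1) (t, x) * e t x := by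
      rw [← integral_const_mul]
      congr 1; ext x; simp only [hf]; ring
    rw [h2]
    have h3 : (1 / ((n:ℝ) + 1) ^ 2) * ∫ x, chif ((n:ℝ) + 1) ((0:ℝ), x) * e 0 x ≤ M := by
      rw [← integral_const_mul]
      refine integral_mono_of_nonneg (Eventually.of_forall fun x => ?_) hinteg (Eventually.of_forall fun x => ?_)
      · have := e0 0 x
        simp only [chif, etaf, Pi.zero_apply]; positivity
      · have h4 : chif ((n:ℝ) + 1) ((0:ℝ), x) ≤ ((n:ℝ) + 1) ^ 2 := by
          simp only [chif, etaf]
          refine pow_le_pow_left₀ (le_max_right _ _) (max_le ?_ (by positivity)) 2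
          have : 0 ≤ √(1 + ‖x‖ ^ 2) := Real.sqrt_nonneg _
          linarith
        have h5 := e0 0 x
        show 1 / ((n:ℝ) + 1) ^ 2 * (chif ((n:ℝ) + 1) ((0:ℝ), x) * e 0 x) ≤ e 0 x
        rw [one_div, inv_mul_le_iff₀ (by positivity)]
        exact mul_le_mul_of_nonneg_right h4 h5
    refine le_trans ?_ h3
    exact mul_le_mul_of_nonneg_left h1 (by positivity)
  have hlim : ∀ x, Tendsto (fun n => f n x) atTop (nhds (e t x)) := by
    intro x
    set c := t + √(1 + ‖x‖ ^ 2)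
    have hc : 0 ≤ c := by positivity
    have h1 : Tendsto (fun n : ℕ => (1 - c / ((n:ℝ) + 1)) ^ 2 * e t x) atTop (nhds ((1 - 0) ^ 2 * e t x)) := by
      have : Tendsto (fun n : ℕ => c / ((n:ℝ) + 1)) atTop (nhds 0) :=
        tendsto_const_nhds.div_atTop (tendsto_natCast_atTop_atTop.atTop_add tendsto_const_nhds)
      exact ((tendsto_const_nhds.sub this).pow 2).mul_const _
    simp only [sub_zero, one_pow, one_mul] at h1
    refine h1.congr' ?_
    filter_upwards [eventually_ge_atTop ⌈c⌉₊] with n hn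
    have hn' : c ≤ n := (Nat.le_ceil c).trans (by exact_mod_cast hn)
    have h2 : chif ((n:ℝ) + 1) (t, x) = ((n:ℝ) + 1 - c) ^ 2 := by
      simp only [chif, etaf]
      rw [max_eq_left]
      · simp only [c]; ring
      · simp only [c] at hn'; linarith
    simp only [hf, h2]
    have : (n:ℝ) + 1 ≠ 0 := by positivity
    field_simp
  have hL : ∫⁻ x, ENNReal.ofReal (e t x) ≤ ENNReal.ofReal M := by
    calc ∫⁻ x, ENNReal.ofReal (e t x) = ∫⁻ x, liminf (fun n => ENNReal.ofReal (f n x)) atTop := by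
          refine lintegral_congr fun x => ?_
          exact ((ENNReal.continuous_ofReal.tendsto _).comp (hlim x)).liminf_eq.symm
      _ ≤ liminf (fun n => ∫⁻ x, ENNReal.ofReal (f n x)) atTop :=
          lintegral_liminf_le fun n => (hfc n).measurable.ennreal_ofReal
      _ ≤ ENNReal.ofReal M := by
          refine liminf_le_of_le (by isBoundedDefault) fun b hb => ?_
          obtain ⟨n, hn⟩ := hb.exists
          refine hn.trans ?_
          rw [← ofReal_integral_eq_lintegral_ofReal
            ((hfc n).integrable_of_hasCompactSupport (hfs n)) (Eventually.of_forall (f0 n))]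
          exact ENNReal.ofReal_le_ofReal (hfi n)
  have hI : Integrable (e t) := by
    refine ⟨(ce t).aestronglyMeasurable, ?_⟩
    rw [hasFiniteIntegral_iff_ofReal (Eventually.of_forall (e0 t))]
    exact hL.trans_lt ENNReal.ofReal_lt_top
  refine ⟨hI, ?_⟩
  rw [← ofReal_integral_eq_lintegral_ofReal hI (Eventually.of_forall (e0 t))] at hL
  exact (ENNReal.ofReal_le_ofReal_iff (integral_nonneg (e0 0))).1 hL


abbrev Sp (N : ℕ) := sphere (0 : Eu N) 1

abbrev sg (N : ℕ) : Measure (Sp N) := (volume : Measure (Eu N)).toSphere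

theorem polar_aux {N : ℕ} [NeZero N] {F : Type*} [NormedAddCommGroup F] [NormedSpace ℝ F] [CompleteSpace F]
    (f : Eu N → F) (hf : Integrable f) :
    Integrable (fun ω : Sp N => ∫ r in Ioi (0:ℝ), r ^ (N - 1) • f (r • (ω : Eu N))) (sg N) ∧
    ∫ x, f x = ∫ ω : Sp N, (∫ r in Ioi (0:ℝ), r ^ (N - 1) • f (r • (ω : Eu N))) ∂(sg N) := by
  have hd : Module.finrank ℝ (Eu N) = N := by simp
  have mp := (volume : Measure (Eu N)).measurePreserving_homeomorphUnitSphereProd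
  have me := (homeomorphUnitSphereProd (Eu N)).measurableEmbedding
  rw [hd] at mp
  set G : Sp N × Ioi (0:ℝ) → F := fun p => f (p.2.1 • (p.1 : Eu N)) with hG
  have hGc : ∀ x : ({(0)}ᶜ : Set (Eu N)), G (homeomorphUnitSphereProd (Eu N) x) = f x := by
    intro x
    have h : ((homeomorphUnitSphereProd (Eu N)).symm (homeomorphUnitSphereProd (Eu N) x) : Eu N) = x := by simp
    rw [← h]
    simp only [hG]
    rw [homeomorphUnitSphereProd_symm_apply_coe]
  have h1 : Integrable (fun x : ({(0)}ᶜ : Set (Eu N)) => f x) ((volume : Measure (Eu N)).comap (↑)) := by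
    have := (MeasurableEmbedding.subtype_coe (measurableSet_singleton (0 : Eu N)).compl).integrable_map_iff (μ := (volume : Measure (Eu N)).comap (↑)) (g := f)
    rw [map_comap_subtype_coe (measurableSet_singleton (0 : Eu N)).compl] at this
    exact this.1 hf.integrableOn
  have h2 : Integrable G ((sg N).prod (.volumeIoiPow (N - 1))) := by
    rw [← mp.integrable_comp_emb me]
    exact h1.congr (Eventually.of_forall fun x => (hGc x).symm)
  have hin : ∀ ω : Sp N, ∫ r : Ioi (0:ℝ), G (ω, r) ∂(.volumeIoiPow (N - 1)) = ∫ r in Ioi (0:ℝ), r ^ (N - 1) • f (r • (ω : Eu N)) := by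
    intro ω
    simp only [Measure.volumeIoiPow, ENNReal.ofReal, hG]
    rw [integral_withDensity_eq_integral_smul,
        integral_subtype_comap measurableSet_Ioi fun a ↦ Real.toNNReal (a ^ (N - 1)) • f (a • (ω : Eu N)),
        setIntegral_congr_fun measurableSet_Ioi fun x hx ↦ ?_]
    · rw [NNReal.smul_def, Real.coe_toNNReal _ (pow_nonneg hx.out.le _)]
    · exact (measurable_subtype_coe.pow_const _).real_toNNReal
  constructor
  · have := h2.integral_prod_left
    exact this.congr (Eventually.of_forall hin)
  · calc ∫ x, f x = ∫ x : ({(0)}ᶜ : Set (Eu N)), f x ∂((volume : Measure (Eu N)).comap (↑)) := by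
          rw [integral_subtype_comap (measurableSet_singleton _).compl fun x ↦ f x, restrict_compl_singleton]
      _ = ∫ p, G p ∂((sg N).prod (.volumeIoiPow (N - 1))) := by
          rw [← mp.integral_comp me]
          exact integral_congr_ae (Eventually.of_forall fun x => (hGc x).symm)
      _ = _ := by
          rw [integral_prod _ h2]
          exact integral_congr_ae (Eventually.of_forall hin)

open scoped Pointwise in
theorem sg_neg (N : ℕ) [NeZero N] : MeasurePreserving (fun ω : Sp N => -ω) (sg N) (sg N) := by
  have hm : Measurable (fun ω : Sp N => -ω) := continuous_neg.measurable
  refine ⟨hm, ?_⟩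
  ext s hs
  rw [Measure.map_apply hm hs, Measure.toSphere_apply' _ hs, Measure.toSphere_apply' _ (hm hs)]
  congr 1
  have : (Ioo (0:ℝ) 1 • (Subtype.val '' ((fun ω : Sp N => -ω) ⁻¹' s)) : Set (Eu N)) = -(Ioo (0:ℝ) 1 • (Subtype.val '' s)) := by
    ext x
    simp only [Set.mem_smul, Set.mem_neg, Set.mem_image, Set.mem_preimage]
    constructor
    · rintro ⟨r, hr, y, ⟨w, hw, rfl⟩, rfl⟩
      exact ⟨r, hr, _, ⟨-w, hw, rfl⟩, by simp⟩
    · rintro ⟨r, hr, y, ⟨w, hw, rfl⟩, h⟩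
      refine ⟨r, hr, _, ⟨-w, by simpa using hw, rfl⟩, ?_⟩
      simp [h]
  rw [this, Measure.measure_neg]

theorem sg_integral_neg {N : ℕ} [NeZero N] {F : Type*} [NormedAddCommGroup F] [NormedSpace ℝ F]
    (f : Sp N → F) : ∫ ω, f (-ω) ∂(sg N) = ∫ ω, f ω ∂(sg N) := by
  exact (sg_neg N).integral_comp (Homeomorph.neg (Sp N)).measurableEmbedding f

theorem polar_full {k : ℕ} {F : Type*} [NormedAddCommGroup F] [NormedSpace ℝ F] [CompleteSpace F]
    (f : Eu (2*k+1) → F) (hf : Integrable f)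
    (hl : ∀ ω : Sp (2*k+1), Integrable (fun r : ℝ => r ^ (2*k) • f (r • (ω : Eu (2*k+1))))) :
    ∫ ω : Sp (2*k+1), (∫ r : ℝ, r ^ (2*k) • f (r • (ω : Eu (2*k+1)))) ∂(sg (2*k+1)) = (2:ℝ) • ∫ x, f x := by
  obtain ⟨h1, h2⟩ := polar_aux f hf
  simp only [Nat.add_sub_cancel] at h1 h2
  set H : Sp (2*k+1) → F := fun ω => ∫ r in Ioi (0:ℝ), r ^ (2*k) • f (r • (ω : Eu (2*k+1))) with hH
  have hs : ∀ ω : Sp (2*k+1), ∫ r : ℝ, r ^ (2*k) • f (r • (ω : Eu (2*k+1))) = H ω + H (-ω) := by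
    intro ω
    rw [← integral_add_compl measurableSet_Ioi (hl ω)]
    congr 1
    rw [compl_Ioi]
    have h := integral_comp_neg_Ioi (0:ℝ) (fun r : ℝ => r ^ (2*k) • f (r • (ω : Eu (2*k+1))))
    rw [neg_zero] at h
    rw [← h]
    simp only [hH]
    refine setIntegral_congr_fun measurableSet_Ioi fun r hr => ?_
    simp [pow_mul]
  simp_rw [hs]
  have hn : Integrable (fun ω => H (-ω)) (sg (2*k+1)) := (sg_neg _).integrable_comp_of_integrable h1
  rw [integral_add h1 hn, sg_integral_neg, h2, two_smul]



section RadonData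
open scoped SchwartzMap FourierTransform RealInnerProductSpace LineDeriv

def lineS {N : ℕ} (g : 𝓢(Eu N, ℂ)) (ω : Sp N) : 𝓢(ℝ, ℂ) :=
  SchwartzMap.compCLMOfAntilipschitz ℂ (K := 1) (g := fun ρ : ℝ => ρ • (ω : Eu N))
    ((ContinuousLinearMap.toSpanSingleton ℝ (ω : Eu N)).hasTemperateGrowth)
    (fun x y => by
      have h1 : ‖(ω : Eu N)‖ = 1 := norm_eq_of_mem_sphere ω
      have : edist (x • (ω : Eu N)) (y • (ω : Eu N)) = edist x y := by
        rw [edist_dist, edist_dist, dist_eq_norm, dist_eq_norm, ← sub_smul, norm_smul, h1, mul_one]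
      simp [this]) g

theorem lineS_apply {N : ℕ} (g : 𝓢(Eu N, ℂ)) (ω : Sp N) (ρ : ℝ) : lineS g ω ρ = g (ρ • (ω : Eu N)) := rfl

def Zs {N : ℕ} (g : 𝓢(Eu N, ℂ)) : ℕ → Sp N → 𝓢(ℝ, ℂ)
  | 0, ω => lineS g ω
  | (j+1), ω => (2 * Real.pi * Complex.I) • SchwartzMap.smulLeftCLM ℂ (inner ℝ · (1:ℝ)) (Zs g j ω)

theorem Zs_apply {N : ℕ} (g : 𝓢(Eu N, ℂ)) (j : ℕ) (ω : Sp N) (ρ : ℝ) :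
    Zs g j ω ρ = (2 * Real.pi * Complex.I * ρ) ^ j * g (ρ • (ω : Eu N)) := by
  induction j with
  | zero => simp [Zs, lineS_apply]
  | succ j ih =>
    have : (inner ℝ · (1:ℝ) : ℝ → ℝ).HasTemperateGrowth := by fun_prop
    simp only [Zs, smul_apply, SchwartzMap.smulLeftCLM_apply_apply this, ih]
    simp
    ring

def Rc {N : ℕ} (g : 𝓢(Eu N, ℂ)) (j : ℕ) (s : ℝ) (ω : Sp N) : ℂ := (𝓕⁻ (Zs g j ω)) s

theorem Rc_eq {N : ℕ} (g : 𝓢(Eu N, ℂ)) (j : ℕ) (s : ℝ) (ω : Sp N) :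
    Rc g j s ω = ∫ ρ : ℝ, (Real.fourierChar (ρ * s) : ℂ) * ((2 * Real.pi * Complex.I * ρ) ^ j * g (ρ • (ω : Eu N))) := by
  rw [Rc, SchwartzMap.fourierInv_coe, Real.fourierInv_eq]
  simp_rw [Zs_apply, Circle.smul_def, smul_eq_mul]
  congr 1; ext ρ
  simp [mul_comm]

theorem Rc_hasDerivAt {N : ℕ} (g : 𝓢(Eu N, ℂ)) (j : ℕ) (s : ℝ) (ω : Sp N) :
    HasDerivAt (fun s => Rc g j s ω) (Rc g (j+1) s ω) s := by
  have h1 : Rc g (j+1) s ω = fderiv ℝ (𝓕⁻ (Zs g j ω) : 𝓢(ℝ, ℂ)) s 1 := by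
    rw [← SchwartzMap.lineDerivOp_apply_eq_fderiv, SchwartzMap.lineDerivOp_fourierInv_eq]
    rfl
  rw [h1]
  exact ((𝓕⁻ (Zs g j ω) : 𝓢(ℝ, ℂ)).differentiableAt (x := s)).hasFDerivAt.hasDerivAt

theorem Rc_continuous {N : ℕ} (g : 𝓢(Eu N, ℂ)) (j : ℕ) :
    Continuous (fun p : ℝ × Sp N => Rc g j p.1 p.2) := by
  simp_rw [Rc_eq]
  obtain ⟨C1, -, hC1⟩ := g.decay j 0
  obtain ⟨C2, -, hC2⟩ := g.decay (j+2) 0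
  simp only [norm_iteratedFDeriv_zero] at hC1 hC2
  refine continuous_of_dominated (bound := fun ρ => (2*Real.pi)^j * ((C1 + C2) * (1 + ρ^2)⁻¹)) ?_ ?_ ?_ ?_
  · intro p
    refine Continuous.aestronglyMeasurable ?_
    have : Continuous fun ρ : ℝ => (Real.fourierChar (ρ * p.1) : ℂ) := by
      exact continuous_subtype_val.comp (Real.continuous_fourierChar.comp (by fun_prop))
    have h2 := g.continuous
    fun_prop
  · intro p
    refine Eventually.of_forall fun ρ => ?_
    have h1 : ‖(p.2 : Eu N)‖ = 1 := norm_eq_of_mem_sphere p.2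
    rw [norm_mul, Circle.norm_coe, one_mul, norm_mul, norm_pow]
    have e1 : ‖2 * (Real.pi:ℂ) * Complex.I * ρ‖ = 2 * Real.pi * |ρ| := by
      simp [abs_of_pos Real.pi_pos]
    rw [e1, mul_pow, mul_assoc]
    refine mul_le_mul_of_nonneg_left ?_ (by positivity)
    have ha := hC1 (ρ • (p.2 : Eu N))
    have hb := hC2 (ρ • (p.2 : Eu N))
    simp only [norm_smul, h1, mul_one, Real.norm_eq_abs] at ha hb
    rw [← div_eq_mul_inv, le_div_iff₀ (by positivity)]
    have : |ρ| ^ (j+2) = |ρ|^j * ρ^2 := by rw [pow_add, sq_abs]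
    rw [this] at hb
    nlinarith
  · exact ((integrable_inv_one_add_sq).const_mul _).const_mul _
  · refine Eventually.of_forall fun ρ => ?_
    have : Continuous fun p : ℝ × Sp N => (Real.fourierChar (ρ * p.1) : ℂ) := by
      exact continuous_subtype_val.comp (Real.continuous_fourierChar.comp (by fun_prop))
    have h2 := g.continuous
    fun_prop

theorem Rc_parity {N : ℕ} (g : 𝓢(Eu N, ℂ)) (j : ℕ) (s : ℝ) (ω : Sp N) :
    Rc g j (-s) (-ω) = (-1)^j * Rc g j s ω := by
  rw [Rc_eq, Rc_eq, ← integral_const_mul, ← integral_neg_eq_self]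
  congr 1; ext ρ
  simp only [Complex.ofReal_neg, mul_neg, neg_mul, neg_neg, neg_smul]
  have hc : ((-ω : Sp N) : Eu N) = -(ω : Eu N) := rfl
  rw [hc, smul_neg, neg_neg]
  rw [neg_pow]
  ring

theorem Rc_weak {N : ℕ} (U : 𝓢(Eu N, ℂ)) (ω : Sp N) (φ : 𝓢(ℝ, ℂ)) :
    ∫ s : ℝ, Rc (𝓕 U) 0 s ω * φ s = ∫ x, U x * φ ⟪x, (ω : Eu N)⟫ := by
  have h1 := SchwartzMap.integral_fourierInv_mul_eq (Zs (𝓕 U) 0 ω) φ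
  simp only [Rc]
  rw [h1]
  have h2 := VectorFourier.integral_fourierIntegral_smul_eq_flip (μ := (volume : Measure (Eu N))) (ν := (volume : Measure ℝ))
    (e := Real.fourierChar) (L := (((innerₗ (Eu N)) (ω : Eu N)).smulRight (LinearMap.id : ℝ →ₗ[ℝ] ℝ)))
    (f := U) (g := (𝓕⁻ φ : 𝓢(ℝ, ℂ))) Real.continuous_fourierChar (by simp; fun_prop) U.integrable (𝓕⁻ φ : 𝓢(ℝ, ℂ)).integrable
  have e1 : ∀ ρ : ℝ, Zs (𝓕 U) 0 ω ρ = VectorFourier.fourierIntegral Real.fourierChar volume (((innerₗ (Eu N)) (ω : Eu N)).smulRight (LinearMap.id : ℝ →ₗ[ℝ] ℝ)) U ρ := by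
    intro ρ
    rw [Zs_apply, pow_zero, one_mul, SchwartzMap.fourier_coe, Real.fourier_eq]
    simp only [VectorFourier.fourierIntegral]
    congr 1; ext x
    simp [real_inner_smul_right, real_inner_comm, mul_comm]
  have e2 : ∀ x : Eu N, φ ⟪x, (ω : Eu N)⟫ = VectorFourier.fourierIntegral Real.fourierChar volume (((innerₗ (Eu N)) (ω : Eu N)).smulRight (LinearMap.id : ℝ →ₗ[ℝ] ℝ)).flip (𝓕⁻ φ : 𝓢(ℝ, ℂ)) x := by
    intro x
    have : φ = 𝓕 (𝓕⁻ φ : 𝓢(ℝ, ℂ)) := (FourierTransform.fourier_fourierInv_eq φ).symm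
    conv_lhs => rw [this]
    rw [SchwartzMap.fourier_coe, Real.fourier_eq]
    simp only [VectorFourier.fourierIntegral]
    congr 1; ext ρ
    simp [real_inner_comm, mul_comm]
  simp only [smul_eq_mul] at h2
  simp_rw [e1, e2]
  exact h2

end RadonData


section RadonData2
open scoped SchwartzMap FourierTransform RealInnerProductSpace LineDeriv

theorem Rc_cont1 {N : ℕ} (g : 𝓢(Eu N, ℂ)) (j : ℕ) (ω : Sp N) : Continuous (fun s => Rc g j s ω) :=
  (𝓕⁻ (Zs g j ω) : 𝓢(ℝ, ℂ)).continuous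

theorem Rc_weak_real {N : ℕ} (U : 𝓢(Eu N, ℂ)) (ω : Sp N) (φ : ℝ → ℝ) (h1 : ContDiff ℝ (⊤ : ℕ∞) φ) (h2 : HasCompactSupport φ) :
    ∫ s : ℝ, φ s • Rc (𝓕 U) 0 s ω = ∫ x, U x * (φ ⟪x, (ω : Eu N)⟫ : ℂ) := by
  have c1 : HasCompactSupport (fun s => (φ s : ℂ)) := h2.comp_left (g := fun r : ℝ => (r : ℂ)) (by simp)
  have c2 : ContDiff ℝ (⊤ : ℕ∞) (fun s => (φ s : ℂ)) := Complex.ofRealCLM.contDiff.comp h1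
  have := Rc_weak U ω (c1.toSchwartzMap c2)
  simp only [HasCompactSupport.toSchwartzMap_toFun] at this
  rw [← this]
  congr 1; ext s
  rw [Complex.real_smul, mul_comm]

theorem Rc_support {N : ℕ} (U : 𝓢(Eu N, ℂ)) (hU : ∀ x, 1 < ‖x‖ → U x = 0) (j : ℕ) (s : ℝ) (ω : Sp N) (hs : 1 < |s|) :
    Rc (𝓕 U) j s ω = 0 := by
  have hO : IsOpen {s : ℝ | 1 < |s|} := isOpen_lt continuous_const continuous_abs
  induction j generalizing s with
  | zero =>
    have hae := hO.ae_eq_zero_of_integral_contDiff_smul_eq_zero (f := fun s => Rc (𝓕 U) 0 s ω) (μ := volume)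
      ((Rc_cont1 (𝓕 U) 0 ω).locallyIntegrable.locallyIntegrableOn _) (by
        intro φ h1 h2 h3
        rw [Rc_weak_real U ω φ h1 h2]
        apply integral_eq_zero_of_ae
        refine Eventually.of_forall fun x => ?_
        by_cases hx : 1 < ‖x‖
        · simp [hU x hx]
        · have : φ ⟪x, (ω : Eu N)⟫ = 0 := by
            by_contra hne
            have h4 := h3 (subset_tsupport _ hne)
            have h5 := abs_real_inner_le_norm x (ω : Eu N)
            rw [norm_eq_of_mem_sphere ω] at h5
            simp only [mem_ofPred_eq] at h4
            linarith
          simp [this])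
    rw [← ae_restrict_iff' hO.measurableSet] at hae
    exact Measure.eqOn_open_of_ae_eq (f := fun s => Rc (𝓕 U) 0 s ω) (g := fun _ => 0) hae hO (Rc_cont1 _ _ _).continuousOn continuousOn_const hs
  | succ j ih =>
    have h1 := Rc_hasDerivAt (𝓕 U) j s ω
    have h2 : (fun s => Rc (𝓕 U) j s ω) =ᶠ[nhds s] fun _ => 0 := by
      filter_upwards [hO.mem_nhds hs] with r hr using ih r hr
    exact (h1.congr_of_eventuallyEq h2.symm).unique (hasDerivAt_const s 0)

theorem Rc_real {N : ℕ} (U : 𝓢(Eu N, ℂ)) (hU : ∀ x, (U x).im = 0) (j : ℕ) (s : ℝ) (ω : Sp N) :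
    (Rc (𝓕 U) j s ω).im = 0 := by
  induction j generalizing s with
  | zero =>
    have hc : Continuous fun s => (Rc (𝓕 U) 0 s ω).im := Complex.continuous_im.comp (Rc_cont1 _ _ _)
    have hae := ae_eq_zero_of_integral_contDiff_smul_eq_zero (f := fun s => (Rc (𝓕 U) 0 s ω).im) (μ := volume)
      hc.locallyIntegrable (by
        intro φ h1 h2
        have h := Rc_weak_real U ω φ h1 h2
        have hi : Integrable (fun s => φ s • Rc (𝓕 U) 0 s ω) :=
          (h1.continuous.smul (Rc_cont1 _ _ _)).integrable_of_hasCompactSupport h2.smul_right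
        have e1 : ∫ x, φ x • (Rc (𝓕 U) 0 x ω).im = (∫ s : ℝ, φ s • Rc (𝓕 U) 0 s ω).im := by
          have := integral_im hi
          simp only [RCLike.im_eq_complex_im] at this
          rw [← this]
          simp
        rw [e1, h]
        have e2 : ∀ x, U x * (φ ⟪x, (ω : Eu N)⟫ : ℂ) = (((U x).re * φ ⟪x, (ω : Eu N)⟫ : ℝ) : ℂ) := by
          intro x
          apply Complex.ext <;> simp [hU x]
        simp_rw [e2]
        rw [integral_complex_ofReal]
        simp)
    have := Continuous.ae_eq_iff_eq (volume : Measure ℝ) hc (continuous_const (y := (0:ℝ))) |>.1 hae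
    exact congrFun this s
  | succ j ih =>
    have h1 : HasDerivAt (fun s => (Rc (𝓕 U) j s ω).im) ((Rc (𝓕 U) (j+1) s ω).im) s := 
      (Complex.imCLM.hasFDerivAt.comp_hasDerivAt s (Rc_hasDerivAt (𝓕 U) j s ω))
    have h2 : (fun s => (Rc (𝓕 U) j s ω).im) = fun _ => 0 := by
      ext r; exact ih r
    rw [h2] at h1
    exact h1.unique (hasDerivAt_const s 0)

theorem Rc_inversion {k : ℕ} (U : 𝓢(Eu (2*k+1), ℂ)) (x : Eu (2*k+1)) :
    ∫ ω : Sp (2*k+1), Rc (𝓕 U) (2*k) ⟪x, (ω : Eu (2*k+1))⟫ ω ∂(sg (2*k+1)) = 2 * (2*Real.pi)^(2*k) * (-1)^k * U x := by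
  set g : 𝓢(Eu (2*k+1), ℂ) := 𝓕 U with hg
  have hU : U x = ∫ ξ, (Real.fourierChar ⟪ξ, x⟫ : ℂ) * g ξ := by
    have : U = 𝓕⁻ (𝓕 U) := (FourierTransform.fourierInv_fourier_eq U).symm
    conv_lhs => rw [this]
    rw [SchwartzMap.fourierInv_coe, Real.fourierInv_eq]
    simp_rw [Circle.smul_def, smul_eq_mul]
    rfl
  set f : Eu (2*k+1) → ℂ := fun ξ => (Real.fourierChar ⟪ξ, x⟫ : ℂ) * g ξ with hf
  have hcirc : Continuous fun ξ : Eu (2*k+1) => (Real.fourierChar ⟪ξ, x⟫ : ℂ) := 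
     continuous_subtype_val.comp (Real.continuous_fourierChar.comp (by fun_prop))
  have hfi : Integrable f := by
    refine (g.integrable (μ := volume)).mono (hcirc.mul g.continuous).aestronglyMeasurable ?_
    refine Eventually.of_forall fun ξ => ?_
    rw [hf, norm_mul, Circle.norm_coe, one_mul]
  have hpt : ∀ (ω : Sp (2*k+1)) (r : ℝ), (Real.fourierChar (r * ⟪x, (ω : Eu (2*k+1))⟫) : ℂ) * ((2 * Real.pi * Complex.I * r) ^ (2*k) * g (r • (ω : Eu (2*k+1)))) = ((2*Real.pi)^(2*k) * (-1)^k) * (r ^ (2*k) • f (r • (ω : Eu (2*k+1)))) := by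
    intro ω r
    simp only [hf, Complex.real_smul]
    rw [real_inner_smul_left, real_inner_comm x]
    have : (2 * Real.pi * Complex.I * r : ℂ)^(2*k) = ((2*Real.pi)^(2*k) * (-1)^k) * r^(2*k) := by
      rw [mul_pow, mul_pow, pow_mul Complex.I, Complex.I_sq]
    rw [this]
    push_cast
    ring
  have hli : ∀ ω : Sp (2*k+1), Integrable (fun r : ℝ => r ^ (2*k) • f (r • (ω : Eu (2*k+1)))) := by
    intro ω
    have h1 := (Zs g (2*k) ω).integrable (μ := volume)
    have h2 : Integrable (fun r : ℝ => (Real.fourierChar (r * ⟪x, (ω : Eu (2*k+1))⟫) : ℂ) * (Zs g (2*k) ω r)) := by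
      refine h1.mono ((Continuous.mul (continuous_subtype_val.comp (Real.continuous_fourierChar.comp (by fun_prop))) (Zs g (2*k) ω).continuous).aestronglyMeasurable) ?_
      refine Eventually.of_forall fun ξ => ?_
      rw [norm_mul, Circle.norm_coe, one_mul]
    have h3 := h2.const_mul (((2*Real.pi)^(2*k) * (-1)^k : ℂ)⁻¹)
    refine h3.congr (Eventually.of_forall fun r => ?_)
    have hne : ((2*Real.pi)^(2*k) * (-1)^k : ℂ) ≠ 0 := by
      have : (Real.pi : ℂ) ≠ 0 := by exact_mod_cast Real.pi_ne_zero
      simp [this]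
    simp only []
    rw [Zs_apply, hpt, ← mul_assoc, inv_mul_cancel₀ hne, one_mul]
  have key := polar_full f hfi hli
  simp_rw [Rc_eq, hpt, integral_const_mul]
  rw [key, ← hU]
  simp
  ring

end RadonData2


theorem grad_sq {N : ℕ} (f : Eu N → ℝ) (x : Eu N) :
    ‖gradient f x‖ ^ 2 = ∑ j, (fderiv ℝ f x (EuclideanSpace.single j 1)) ^ 2 := by
  rw [EuclideanSpace.norm_sq_eq]
  congr 1; ext j
  rw [Real.norm_eq_abs, sq_abs]
  congr 1
  have h : inner ℝ (gradient f x) (EuclideanSpace.single j (1:ℝ)) = fderiv ℝ f x (EuclideanSpace.single j 1) := by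
    rw [gradient, InnerProductSpace.toDual_symm_apply]
  rw [← h, EuclideanSpace.inner_single_right]
  simp

theorem cont_comp2 {X Y Z W : Type*} [TopologicalSpace X] [TopologicalSpace Y] [TopologicalSpace Z] [TopologicalSpace W]
    {F : X → Y → Z} (h : Continuous fun p : X × Y => F p.1 p.2) {f : W → X} {g : W → Y} (hf : Continuous f) (hg : Continuous g) :
    Continuous fun w => F (f w) (g w) := h.comp (hf.prodMk hg)

section RadonData3
open scoped SchwartzMap FourierTransform RealInnerProductSpace LineDeriv

theorem schwartz_sq_integrable {E : Type*} [NormedAddCommGroup E] [InnerProductSpace ℝ E] [FiniteDimensional ℝ E]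
    [MeasurableSpace E] [BorelSpace E] (f : 𝓢(E, ℂ)) : Integrable (fun x => ‖f x‖ ^ 2) :=
  (memLp_two_iff_integrable_sq_norm f.continuous.aestronglyMeasurable).1 (f.memLp 2)

theorem plancherel_grad {N : ℕ} (u₀ : Eu N → ℝ)
    (hu₀ : ContDiff ℝ (⊤ : ℕ∞) u₀) (U : 𝓢(Eu N, ℂ)) (hU : ∀ x, U x = u₀ x) :
    Integrable (fun ξ => (2*Real.pi)^2 * ‖ξ‖^2 * ‖(𝓕 U : 𝓢(Eu N, ℂ)) ξ‖^2) ∧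
    ∫ ξ, (2*Real.pi)^2 * ‖ξ‖^2 * ‖(𝓕 U : 𝓢(Eu N, ℂ)) ξ‖^2 = ∫ x, ‖gradient u₀ x‖^2 := by
  have h1 : ∀ (j : Fin N) (x : Eu N), ‖(∂_{(EuclideanSpace.single j (1:ℝ) : Eu N)} U) x‖^2 = (fderiv ℝ u₀ x (EuclideanSpace.single j 1)) ^ 2 := by
    intro j x
    rw [SchwartzMap.lineDerivOp_apply_eq_fderiv]
    have e : (U : Eu N → ℂ) = fun x => Complex.ofRealCLM (u₀ x) := by ext x; rw [hU]; rfl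
    have hd : DifferentiableAt ℝ u₀ x := hu₀.differentiable (by simp) x
    have := (Complex.ofRealCLM.hasFDerivAt.comp x hd.hasFDerivAt).fderiv
    rw [e]
    erw [this]
    simp
  have h2 : ∀ (j : Fin N) (ξ : Eu N), ‖(𝓕 (∂_{(EuclideanSpace.single j (1:ℝ) : Eu N)} U) : 𝓢(Eu N, ℂ)) ξ‖^2 = (2*Real.pi)^2 * (ξ j)^2 * ‖(𝓕 U : 𝓢(Eu N, ℂ)) ξ‖^2 := by
    intro j ξ
    have : (inner ℝ · (EuclideanSpace.single j (1:ℝ) : Eu N)).HasTemperateGrowth := by fun_prop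
    rw [SchwartzMap.fourier_lineDerivOp_eq]
    simp only [smul_apply, SchwartzMap.smulLeftCLM_apply_apply this]
    rw [norm_smul, norm_smul, EuclideanSpace.inner_single_right]
    simp [abs_of_pos Real.pi_pos]
    rw [mul_pow, mul_pow, mul_pow, sq_abs]
    ring
  have h3 : ∀ ξ : Eu N, (2*Real.pi)^2 * ‖ξ‖^2 * ‖(𝓕 U : 𝓢(Eu N, ℂ)) ξ‖^2 = ∑ j, ‖(𝓕 (∂_{(EuclideanSpace.single j (1:ℝ) : Eu N)} U) : 𝓢(Eu N, ℂ)) ξ‖^2 := by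
    intro ξ
    simp_rw [h2]
    rw [← Finset.sum_mul, ← Finset.mul_sum, EuclideanSpace.norm_sq_eq]
    simp
  simp_rw [h3]
  refine ⟨integrable_finsetSum _ fun j _ => schwartz_sq_integrable _, ?_⟩
  rw [integral_finsetSum _ fun j _ => schwartz_sq_integrable _]
  simp_rw [grad_sq, ← h1]
  rw [integral_finsetSum _ fun j _ => schwartz_sq_integrable _]
  refine Finset.sum_congr rfl fun j _ => SchwartzMap.integral_norm_sq_fourier _

theorem Rc_energy {k : ℕ} (u₀ : Eu (2*k+1) → ℝ)
    (hu₀ : ContDiff ℝ (⊤ : ℕ∞) u₀) (U : 𝓢(Eu (2*k+1), ℂ)) (hU : ∀ x, U x = u₀ x) :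
    ∫ ω : Sp (2*k+1), (∫ s : ℝ, ‖Rc (𝓕 U) (k+1) s ω‖^2) ∂(sg (2*k+1)) = 2 * (2*Real.pi)^(2*k) * ∫ x, ‖gradient u₀ x‖^2 := by
  obtain ⟨hi, he⟩ := plancherel_grad u₀ hu₀ U hU
  set g : 𝓢(Eu (2*k+1), ℂ) := 𝓕 U with hg
  have hZ : ∀ (ω : Sp (2*k+1)) (r : ℝ), ‖Zs g (k+1) ω r‖^2 = (2*Real.pi)^(2*k) * (r^(2*k) • ((2*Real.pi)^2 * ‖r • (ω : Eu (2*k+1))‖^2 * ‖g (r • (ω : Eu (2*k+1)))‖^2)) := by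
    intro ω r
    have h1 : ‖(ω : Eu (2*k+1))‖ = 1 := norm_eq_of_mem_sphere ω
    have e1 : ‖2 * (Real.pi:ℂ) * Complex.I * r‖ = 2 * Real.pi * |r| := by
      simp [abs_of_pos Real.pi_pos]
    have e2 : (|r|^(k+1))^2 = r^(2*k) * r^2 := by
      rw [← pow_mul, mul_comm (k+1), pow_mul, sq_abs]; ring
    rw [Zs_apply, norm_mul, norm_pow, e1, norm_smul, h1, mul_one, Real.norm_eq_abs, sq_abs, mul_pow, mul_pow, mul_pow, e2, smul_eq_mul]
    ring
  have hP : ∀ ω : Sp (2*k+1), ∫ s : ℝ, ‖Rc g (k+1) s ω‖^2 = ∫ r : ℝ, ‖Zs g (k+1) ω r‖^2 := by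
    intro ω
    have := SchwartzMap.integral_norm_sq_fourier (𝓕⁻ (Zs g (k+1) ω) : 𝓢(ℝ, ℂ))
    rw [FourierTransform.fourier_fourierInv_eq] at this
    exact this.symm
  have hli : ∀ ω : Sp (2*k+1), Integrable (fun r : ℝ => r ^ (2*k) • ((2*Real.pi)^2 * ‖r • (ω : Eu (2*k+1))‖^2 * ‖g (r • (ω : Eu (2*k+1)))‖^2)) := by
    intro ω
    have := (schwartz_sq_integrable (Zs g (k+1) ω)).const_mul (((2*Real.pi)^(2*k))⁻¹)
    refine this.congr (Eventually.of_forall fun r => ?_)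
    simp only []
    rw [hZ, ← mul_assoc, inv_mul_cancel₀ (by positivity), one_mul]
  have key := polar_full _ hi hli
  simp_rw [hP, hZ, integral_const_mul]
  rw [key, he, smul_eq_mul]
  ring

theorem radon_data {k : ℕ} (u₀ : Eu (2*k+1) → ℝ)
    (hu₀ : ContDiff ℝ (⊤ : ℕ∞) u₀) (hc : HasCompactSupport u₀)
    (hs : Function.support u₀ ⊆ Metric.closedBall 0 1) :
    ∃ R : ℕ → ℝ → Sp (2*k+1) → ℝ,
      (∀ j, Continuous (fun p : ℝ × Sp (2*k+1) => R j p.1 p.2)) ∧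
      (∀ j s ω, HasDerivAt (fun s => R j s ω) (R (j+1) s ω) s) ∧
      (∀ j s ω, 1 < |s| → R j s ω = 0) ∧
      (∀ j s ω, R j (-s) (-ω) = (-1)^j * R j s ω) ∧
      (∀ x, ∫ ω : Sp (2*k+1), R (2*k) ⟪x, (ω : Eu (2*k+1))⟫ ω ∂(sg (2*k+1)) = 2 * (2*Real.pi)^(2*k) * (-1)^k * u₀ x) ∧
      ∫ ω : Sp (2*k+1), (∫ s : ℝ, (R (k+1) s ω)^2) ∂(sg (2*k+1)) = 2 * (2*Real.pi)^(2*k) * ∫ x, ‖gradient u₀ x‖^2 := by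
  have c1 : HasCompactSupport (fun s => (u₀ s : ℂ)) := hc.comp_left (g := fun r : ℝ => (r : ℂ)) (by simp)
  have c2 : ContDiff ℝ (⊤ : ℕ∞) (fun s => (u₀ s : ℂ)) := Complex.ofRealCLM.contDiff.comp hu₀
  obtain ⟨U, hU⟩ : ∃ U : 𝓢(Eu (2*k+1), ℂ), ∀ x, U x = u₀ x := ⟨c1.toSchwartzMap c2, fun x => rfl⟩
  refine ⟨fun j s ω => (Rc (𝓕 U) j s ω).re, ?_, ?_, ?_, ?_, ?_, ?_⟩
  · intro j; exact Complex.continuous_re.comp (Rc_continuous (𝓕 U) j)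
  · intro j s ω
    exact (Complex.reCLM.hasFDerivAt.comp_hasDerivAt s (Rc_hasDerivAt (𝓕 U) j s ω))
  · intro j s ω h
    beta_reduce
    rw [Rc_support U _ j s ω h]
    · simp
    · intro x hx
      rw [hU]
      by_contra hne
      have := hs (show x ∈ Function.support u₀ from fun h0 => hne (by simp [h0]))
      rw [mem_closedBall_zero_iff] at this
      linarith
  · intro j s ω
    beta_reduce
    rw [Rc_parity]
    have : ((-1:ℂ)^j) = (((-1:ℝ)^j : ℝ) : ℂ) := by push_cast; rfl
    rw [this, Complex.re_ofReal_mul]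
  · intro x
    have h := Rc_inversion U x
    have hi : Integrable (fun ω : Sp (2*k+1) => Rc (𝓕 U) (2*k) ⟪x, (ω : Eu (2*k+1))⟫ ω) (sg (2*k+1)) := by
      refine Continuous.integrable_of_hasCompactSupport ?_ (HasCompactSupport.of_compactSpace _)
      exact cont_comp2 (Rc_continuous (𝓕 U) (2*k)) (by fun_prop) continuous_id
    have h2 := integral_re hi
    simp only [RCLike.re_eq_complex_re] at h2
    rw [h2, h, hU]
    have : (2 * (2 * (Real.pi:ℂ)) ^ (2 * k) * (-1) ^ k * (u₀ x : ℂ)) = ((2 * (2 * Real.pi) ^ (2 * k) * (-1) ^ k * u₀ x : ℝ) : ℂ) := by push_cast; rfl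
    rw [this, Complex.ofReal_re]
  · rw [← Rc_energy u₀ hu₀ U hU]
    congr 1; ext ω; congr 1; ext s
    have := Rc_real U (fun x => by rw [hU]; simp) (k+1) s ω
    rw [← Complex.normSq_eq_norm_sq, Complex.normSq_apply, this]
    ring

end RadonData3


section PlaneWaves
open scoped RealInnerProductSpace

def Pw {N : ℕ} (h : ℝ → Sp N → ℝ) (p : ℝ × Eu N) : ℝ := ∫ ω : Sp N, h (⟪p.2, (ω : Eu N)⟫ - p.1) ω ∂(sg N)

def Lw {N : ℕ} (ω : Sp N) : ℝ × Eu N →L[ℝ] ℝ :=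
  (innerSL ℝ (ω : Eu N)).comp (ContinuousLinearMap.snd ℝ ℝ (Eu N)) - ContinuousLinearMap.fst ℝ ℝ (Eu N)

theorem Lw_apply {N : ℕ} (ω : Sp N) (p : ℝ × Eu N) : Lw ω p = ⟪p.2, (ω : Eu N)⟫ - p.1 := by
  simp [Lw, real_inner_comm]

theorem Lw_continuous {N : ℕ} : Continuous (Lw : Sp N → _) := by
  unfold Lw
  refine Continuous.sub ?_ continuous_const
  refine Continuous.clm_comp ?_ continuous_const
  exact (innerSL ℝ).continuous.comp continuous_subtype_val

theorem Pw_hasFDerivAt {N : ℕ} (h h' : ℝ → Sp N → ℝ)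
    (ch : Continuous fun p : ℝ × Sp N => h p.1 p.2) (ch' : Continuous fun p : ℝ × Sp N => h' p.1 p.2)
    (hd : ∀ s ω, HasDerivAt (fun s => h s ω) (h' s ω) s) (p : ℝ × Eu N) :
    HasFDerivAt (Pw h) (∫ ω : Sp N, h' (⟪p.2, (ω : Eu N)⟫ - p.1) ω • Lw ω ∂(sg N)) p := by
  have := aux_param (sg N) (fun (p : ℝ × Eu N) ω => h (⟪p.2, (ω : Eu N)⟫ - p.1) ω)
    (fun (p : ℝ × Eu N) ω => h' (⟪p.2, (ω : Eu N)⟫ - p.1) ω • Lw ω)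
    (cont_comp2 ch (by fun_prop) (by fun_prop))
    ((cont_comp2 ch' (by fun_prop) (by fun_prop) : Continuous fun (q : (ℝ × Eu N) × Sp N) => h' (⟪q.1.2, (q.2 : Eu N)⟫ - q.1.1) q.2).smul (Lw_continuous.comp continuous_snd))
    (by
      intro p ω
      have h1 : HasFDerivAt (fun p : ℝ × Eu N => ⟪p.2, (ω : Eu N)⟫ - p.1) (Lw ω) p := by
        have := (Lw ω).hasFDerivAt (x := p)
        refine this.congr_of_eventuallyEq (Eventually.of_forall fun q => (Lw_apply ω q).symm)
      exact (hd _ ω).comp_hasFDerivAt p h1) isCompact_univ p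
  rw [Measure.restrict_univ] at this
  exact this

theorem Pw_fderiv {N : ℕ} (h h' : ℝ → Sp N → ℝ)
    (ch : Continuous fun p : ℝ × Sp N => h p.1 p.2) (ch' : Continuous fun p : ℝ × Sp N => h' p.1 p.2)
    (hd : ∀ s ω, HasDerivAt (fun s => h s ω) (h' s ω) s) (p v : ℝ × Eu N) :
    fderiv ℝ (Pw h) p v = ∫ ω : Sp N, h' (⟪p.2, (ω : Eu N)⟫ - p.1) ω * (⟪v.2, (ω : Eu N)⟫ - v.1) ∂(sg N) := by
  rw [(Pw_hasFDerivAt h h' ch ch' hd p).fderiv, ContinuousLinearMap.integral_apply]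
  · simp [Lw_apply]
  · refine Continuous.integrable_of_hasCompactSupport ?_ (HasCompactSupport.of_compactSpace _)
    exact (cont_comp2 ch' (by fun_prop) (by fun_prop) : Continuous fun (q : Sp N) => h' (⟪p.2, (q : Eu N)⟫ - p.1) q).smul Lw_continuous

theorem Pw_contDiff {N : ℕ} (h h' : ℝ → Sp N → ℝ)
    (ch : Continuous fun p : ℝ × Sp N => h p.1 p.2) (ch' : Continuous fun p : ℝ × Sp N => h' p.1 p.2)
    (hd : ∀ s ω, HasDerivAt (fun s => h s ω) (h' s ω) s) : ContDiff ℝ 1 (Pw h) := by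
  rw [contDiff_one_iff_hasFDerivAt]
  refine ⟨_, ?_, Pw_hasFDerivAt h h' ch ch' hd⟩
  have := continuous_parametric_integral_of_continuous (μ := sg N) (s := univ)
    (f := fun (p : ℝ × Eu N) ω => h' (⟪p.2, (ω : Eu N)⟫ - p.1) ω • Lw ω)
    ((cont_comp2 ch' (by fun_prop) (by fun_prop) : Continuous fun (q : (ℝ × Eu N) × Sp N) => h' (⟪q.1.2, (q.2 : Eu N)⟫ - q.1.1) q.2).smul (Lw_continuous.comp continuous_snd)) isCompact_univ
  simpa using this

theorem sp_int {N : ℕ} {f : Sp N → ℝ} (hf : Continuous f) : Integrable f (sg N) :=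
  hf.integrable_of_hasCompactSupport (HasCompactSupport.of_compactSpace _)

/-- Plane-wave fields solve the first order system. -/
theorem Pw_wsys {N : ℕ} (f1 f2 : ℝ → Sp N → ℝ)
    (c1 : Continuous fun p : ℝ × Sp N => f1 p.1 p.2) (c2 : Continuous fun p : ℝ × Sp N => f2 p.1 p.2)
    (hd : ∀ s ω, HasDerivAt (fun s => f1 s ω) (f2 s ω) s) :
    WSys (Pw fun s ω => -f1 s ω) (fun j => Pw fun s ω => (ω : Eu N) j * f1 s ω) := by
  have cc : ∀ j : Fin N, Continuous fun ω : Sp N => (ω : Eu N) j := fun j => by fun_prop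
  have ca : Continuous fun p : ℝ × Sp N => -f1 p.1 p.2 := c1.neg
  have ca' : Continuous fun p : ℝ × Sp N => -f2 p.1 p.2 := c2.neg
  have cg : ∀ j, Continuous fun p : ℝ × Sp N => (p.2 : Eu N) j * f1 p.1 p.2 := fun j => ((cc j).comp continuous_snd).mul c1
  have cg' : ∀ j, Continuous fun p : ℝ × Sp N => (p.2 : Eu N) j * f2 p.1 p.2 := fun j => ((cc j).comp continuous_snd).mul c2
  have da : ∀ s ω, HasDerivAt (fun s => -f1 s ω) (-f2 s ω) s := fun s ω => (hd s ω).neg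
  have dg : ∀ (j : Fin N) s (ω : Sp N), HasDerivAt (fun s => (ω : Eu N) j * f1 s ω) ((ω : Eu N) j * f2 s ω) s := fun j s ω => (hd s ω).const_mul _
  have hin : ∀ (ω : Sp N) (j : Fin N), ⟪EuclideanSpace.single j (1:ℝ), (ω : Eu N)⟫ = (ω : Eu N) j := by
    intro ω j; rw [EuclideanSpace.inner_single_left]; simp
  refine ⟨Pw_contDiff _ _ ca ca' da, fun j => Pw_contDiff _ _ (cg j) (cg' j) (dg j), ?_, ?_⟩
  · intro p
    rw [Pw_fderiv _ _ ca ca' da]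
    simp_rw [fun j => Pw_fderiv _ _ (cg j) (cg' j) (dg j)]
    rw [← integral_finsetSum]
    · congr 1; ext ω
      simp only [hin, inner_zero_left, sub_zero, zero_sub]
      have : ∑ j, (ω : Eu N) j ^ 2 = 1 := by
        have h1 : ‖(ω : Eu N)‖ = 1 := norm_eq_of_mem_sphere ω
        have h2 := EuclideanSpace.norm_sq_eq (ω : Eu N)
        rw [h1] at h2
        simpa using h2.symm
      have h3 : ∀ j, (ω : Eu N) j * f2 (⟪p.2, (ω : Eu N)⟫ - p.1) ω * (ω : Eu N) j = f2 (⟪p.2, (ω : Eu N)⟫ - p.1) ω * (ω : Eu N) j ^ 2 := fun j => by ring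
      simp_rw [h3]
      rw [← Finset.mul_sum, this]
      ring
    · intro j _
      refine sp_int ?_
      refine Continuous.mul ((cc j).mul (cont_comp2 c2 (by fun_prop) continuous_id)) (by fun_prop)
  · intro p j
    rw [Pw_fderiv _ _ ca ca' da, Pw_fderiv _ _ (cg j) (cg' j) (dg j)]
    congr 1; ext ω
    simp only [hin, inner_zero_left]
    ring

/-- The fields of a smooth solution of the wave equation. -/
theorem wave_wsys {N : ℕ} (u : ℝ → Eu N → ℝ)
    (hu : ContDiff ℝ (⊤ : ℕ∞) (fun p : ℝ × Eu N => u p.1 p.2))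
    (hwave : ∀ t x, deriv (fun s => deriv (fun r => u r x) s) t = ∑ j, d2 (u t) j x) :
    WSys (fun p : ℝ × Eu N => deriv (fun s => u s p.2) p.1)
      (fun j (p : ℝ × Eu N) => fderiv ℝ (u p.1) p.2 (EuclideanSpace.single j 1)) := by
  set V : ℝ × Eu N → ℝ := fun p => u p.1 p.2 with hV
  have hV1 : ContDiff ℝ 1 V := hu.of_le (by exact_mod_cast le_top)
  have ea : (fun p : ℝ × Eu N => deriv (fun s => u s p.2) p.1) = fun p => fderiv ℝ V p (1, 0) := by
    ext p; exact (aux_hasDeriv_fst V hV1 p.1 p.2).deriv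
  have eg : ∀ j, (fun p : ℝ × Eu N => fderiv ℝ (u p.1) p.2 (EuclideanSpace.single j 1)) = fun p => fderiv ℝ V p (0, EuclideanSpace.single j 1) := by
    intro j
    ext p; exact (aux_fderiv_snd V hV1 p.1 p.2 _)
  have hf : ContDiff ℝ (⊤ : ℕ∞) (fderiv ℝ V) := hu.fderiv_right (by simp)
  have hfv : ∀ v, ContDiff ℝ 1 (fun p => fderiv ℝ V p v) := fun v =>
    (hf.of_le (by exact_mod_cast le_top)).clm_apply contDiff_const
  have hff : ∀ p v w, fderiv ℝ (fun p => fderiv ℝ V p v) p w = fderiv ℝ (fderiv ℝ V) p w v := by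
    intro p v w
    have h1 : DifferentiableAt ℝ (fderiv ℝ V) p := hf.differentiable (by simp) p
    rw [fderiv_clm_apply h1 (differentiableAt_const v)]
    simp
  have hsym : ∀ p v w, fderiv ℝ (fderiv ℝ V) p w v = fderiv ℝ (fderiv ℝ V) p v w := by
    intro p v w
    exact (hu.contDiffAt.isSymmSndFDerivAt (by simp; exact (WithTop.coe_le_coe.2 (le_top : (2:ℕ∞) ≤ ⊤) : ((2:ℕ∞) : WithTop ℕ∞) ≤ _))) w v
  refine ⟨?_, ?_, ?_, ?_⟩
  · rw [ea]; exact hfv _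
  · intro j; rw [eg]; exact hfv _
  · intro p
    have h := hwave p.1 p.2
    have h1 : deriv (fun s => deriv (fun r => u r p.2) s) p.1 = fderiv ℝ (fun p => fderiv ℝ V p (1, 0)) p (1, 0) := by
      have := (aux_hasDeriv_fst _ (hfv (1,0)) p.1 p.2).deriv
      rw [← this]
      congr 1
      ext s
      exact congrFun ea (s, p.2)
    have h2 : ∀ j, d2 (u p.1) j p.2 = fderiv ℝ (fun p => fderiv ℝ V p (0, EuclideanSpace.single j 1)) p (0, EuclideanSpace.single j 1) := by
      intro j
      have := (aux_fderiv_snd _ (hfv (0, EuclideanSpace.single j 1)) p.1 p.2 (EuclideanSpace.single j 1))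
      rw [← this]
      unfold d2
      congr 2
      ext y
      exact congrFun (eg j) (p.1, y)
    rw [ea, ← h1, h]
    refine Finset.sum_congr rfl fun j _ => ?_
    rw [eg, ← h2]
  · intro p j
    rw [ea, eg, hff, hff, hsym]

/-- Plane wave representation of the fields of the solution. -/
theorem wave_plane_rep {k : ℕ} (u₀ : Eu (2*k+1) → ℝ)
    (hu₀ : ContDiff ℝ (⊤ : ℕ∞) u₀) (hu₀c : HasCompactSupport u₀)
    (u : ℝ → Eu (2*k+1) → ℝ)
    (hu : ContDiff ℝ (⊤ : ℕ∞) (fun p : ℝ × Eu (2*k+1) => u p.1 p.2))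
    (hwave : ∀ t x, deriv (fun s => deriv (fun r => u r x) s) t = ∑ j, d2 (u t) j x)
    (hinit0 : ∀ x, u 0 x = u₀ x)
    (hinit1 : ∀ x, deriv (fun s => u s x) 0 = 0)
    (R : ℕ → ℝ → Sp (2*k+1) → ℝ)
    (hR1 : ∀ j, Continuous (fun p : ℝ × Sp (2*k+1) => R j p.1 p.2))
    (hR2 : ∀ j s ω, HasDerivAt (fun s => R j s ω) (R (j+1) s ω) s)
    (hR4 : ∀ j s ω, R j (-s) (-ω) = (-1)^j * R j s ω)
    (hR5 : ∀ x, ∫ ω : Sp (2*k+1), R (2*k) ⟪x, (ω : Eu (2*k+1))⟫ ω ∂(sg (2*k+1)) = 2 * (2*Real.pi)^(2*k) * (-1)^k * u₀ x)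
    (c : ℝ) (hc : c * (2 * (2*Real.pi)^(2*k) * (-1)^k) = 1) (t : ℝ) (ht : 0 ≤ t) :
    (∀ x, deriv (fun s => u s x) t = - ∫ ω : Sp (2*k+1), c * R (2*k+1) (⟪x, (ω : Eu (2*k+1))⟫ - t) ω ∂(sg (2*k+1))) ∧
    (∀ x j, fderiv ℝ (u t) x (EuclideanSpace.single j 1) = ∫ ω : Sp (2*k+1), (ω : Eu (2*k+1)) j * (c * R (2*k+1) (⟪x, (ω : Eu (2*k+1))⟫ - t) ω) ∂(sg (2*k+1))) ∧
    Integrable (fun x => (deriv (fun s => u s x) t)^2 + ∑ j, (fderiv ℝ (u t) x (EuclideanSpace.single j 1))^2) ∧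
    ∫ x, ((deriv (fun s => u s x) t)^2 + ∑ j, (fderiv ℝ (u t) x (EuclideanSpace.single j 1))^2) ≤ ∫ x, ‖gradient u₀ x‖^2 := by
  have hW := wave_wsys u hu hwave
  have e0 : u 0 = u₀ := funext hinit0
  have cR : ∀ j, Continuous (fun p : ℝ × Sp (2*k+1) => c * R j p.1 p.2) := fun j => continuous_const.mul (hR1 j)
  have dR : ∀ j s ω, HasDerivAt (fun s => c * R j s ω) (c * R (j+1) s ω) s := fun j s ω => (hR2 j s ω).const_mul c
  have hP := Pw_wsys (fun s ω => c * R (2*k+1) s ω) (fun s ω => c * R (2*k+2) s ω) (cR _) (cR _) (dR _)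
  have hin : ∀ (ω : Sp (2*k+1)) (j : Fin (2*k+1)), ⟪EuclideanSpace.single j (1:ℝ), (ω : Eu (2*k+1))⟫ = (ω : Eu (2*k+1)) j := by
    intro ω j; rw [EuclideanSpace.inner_single_left]; simp
  have hPa : ∀ x, Pw (fun s ω => -(c * R (2*k+1) s ω)) (0, x) = 0 := by
    intro x
    have h1 : Pw (fun s ω => -(c * R (2*k+1) s ω)) (0, x) = - Pw (fun s ω => -(c * R (2*k+1) s ω)) (0, x) := by
      unfold Pw
      have h2 := sg_integral_neg (fun ω : Sp (2*k+1) => -(c * R (2*k+1) (⟪x, (ω : Eu (2*k+1))⟫) ω))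
      simp only [sub_zero]
      rw [← integral_neg]
      rw [← h2]
      refine integral_congr_ae (Eventually.of_forall fun ω => ?_)
      have hcoe : ((-ω : Sp (2*k+1)) : Eu (2*k+1)) = -(ω : Eu (2*k+1)) := rfl
      simp only [hcoe, inner_neg_right, neg_neg]
      rw [hR4]
      have : (-1:ℝ)^(2*k+1) = -1 := by rw [pow_succ, pow_mul]; simp
      rw [this]; ring
    linarith
  have hPg : ∀ j x, Pw (fun s ω => (ω : Eu (2*k+1)) j * (c * R (2*k+1) s ω)) (0, x) = fderiv ℝ (u 0) x (EuclideanSpace.single j 1) := by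
    intro j x
    have e1 : u 0 = fun x => Pw (fun s ω => c * R (2*k) s ω) (0, x) := by
      ext y
      unfold Pw
      simp only [sub_zero]
      rw [integral_const_mul, hR5, e0, ← mul_assoc, hc, one_mul]
    rw [e1, aux_fderiv_snd _ (Pw_contDiff _ _ (cR _) (cR _) (dR _)), Pw_fderiv _ _ (cR _) (cR _) (dR _)]
    unfold Pw
    congr 1; ext ω
    simp only [hin, sub_zero]
    ring
  have hD : WSys (fun p => deriv (fun s => u s p.2) p.1 - Pw (fun s ω => -(c * R (2*k+1) s ω)) p)
      (fun j p => fderiv ℝ (u p.1) p.2 (EuclideanSpace.single j 1) - Pw (fun s (ω : Sp (2*k+1)) => (ω : Eu (2*k+1)) j * (c * R (2*k+1) s ω)) p) := by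
    have d1 := hW.ca.differentiable (by simp)
    have d2' := hP.ca.differentiable (by simp)
    have d3 := fun j => (hW.cg j).differentiable (by simp)
    have d4 := fun j => (hP.cg j).differentiable (by simp)
    refine ⟨hW.ca.sub hP.ca, fun j => (hW.cg j).sub (hP.cg j), ?_, ?_⟩
    · intro p
      rw [fderiv_fun_sub (d1 p) (d2' p)]
      simp_rw [fun j => fderiv_fun_sub (d3 j p) (d4 j p)]
      simp only [sub_apply, Finset.sum_sub_distrib]
      rw [hW.ha, hP.ha]
    · intro p j
      rw [fderiv_fun_sub (d1 p) (d2' p), fderiv_fun_sub (d3 j p) (d4 j p)]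
      simp only [sub_apply]
      rw [hW.hg, hP.hg]
  have hZ := fun x => wsys_zero hD (fun x => by simp only [hPa, hinit1, sub_zero]) (fun j x => by simp only [hPg, sub_self]) t ht x
  have hi0 : Integrable (fun x => (deriv (fun s => u s x) 0)^2 + ∑ j, (fderiv ℝ (u 0) x (EuclideanSpace.single j 1))^2) := by
    simp only [hinit1, e0]
    have hcont : Continuous fun x => (0:ℝ)^2 + ∑ j : Fin (2*k+1), (fderiv ℝ u₀ x (EuclideanSpace.single j 1))^2 := by
      have h1 : Continuous (fderiv ℝ u₀) := hu₀.continuous_fderiv (by simp)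
      fun_prop
    refine hcont.integrable_of_hasCompactSupport ?_
    have h2 := hu₀c.fderiv (𝕜 := ℝ)
    refine h2.mono ?_
    intro x hx h3
    apply hx
    simp [h3]
  obtain ⟨hE1, hE2⟩ := wsys_energy hW t ht hi0
  refine ⟨fun x => ?_, fun x j => ?_, hE1, hE2.trans (le_of_eq ?_)⟩
  · have := (hZ x).1
    simp only [Pw, integral_neg] at this
    linarith
  · have := (hZ x).2 j
    simp only [Pw] at this
    linarith
  · simp only [hinit1, e0]
    congr 1; ext x
    rw [grad_sq]; ring

end PlaneWaves

section Slices
open scoped RealInnerProductSpace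

theorem slice_exists {k : ℕ} (ω : Sp (2*k+1)) : ∃ (T : ℝ × Eu (2*k) → Eu (2*k+1)) (i : Eu (2*k) →ₗᵢ[ℝ] Eu (2*k+1)),
    MeasurePreserving T ∧ MeasurableEmbedding T ∧ (∀ p, T p = p.1 • (ω : Eu (2*k+1)) + i p.2) ∧ (∀ y, ⟪i y, (ω : Eu (2*k+1))⟫ = 0) := by
  have hω : ‖(ω : Eu (2*k+1))‖ = 1 := norm_eq_of_mem_sphere ω
  have h0 : (ω : Eu (2*k+1)) ≠ 0 := fun h => by simp [h] at hω
  have : Fact (Module.finrank ℝ (Eu (2*k+1)) = 2*k+1) := ⟨by simp⟩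
  let bs := OrthonormalBasis.fromOrthogonalSpanSingleton (𝕜 := ℝ) (2*k) h0
  let i : Eu (2*k) →ₗᵢ[ℝ] Eu (2*k+1) := (ℝ ∙ (ω : Eu (2*k+1)))ᗮ.subtypeₗᵢ.comp bs.repr.symm.toLinearIsometry
  have hi : ∀ y, ⟪i y, (ω : Eu (2*k+1))⟫ = 0 := by
    intro y
    exact Submodule.mem_orthogonal_singleton_iff_inner_left.1 (bs.repr.symm y).2
  let L0 : WithLp 2 (ℝ × Eu (2*k)) →ₗ[ℝ] Eu (2*k+1) :=
    { toFun := fun p => p.fst • (ω : Eu (2*k+1)) + i p.snd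
      map_add' := fun p q => by
        simp only [WithLp.add_fst, WithLp.add_snd, map_add, add_smul]; abel
      map_smul' := fun c p => by
        simp [smul_smul, smul_add] }
  let L1 : WithLp 2 (ℝ × Eu (2*k)) →ₗᵢ[ℝ] Eu (2*k+1) := ⟨L0, fun p => by
    have h1 : ‖L0 p‖^2 = ‖p‖^2 := by
      show ‖p.fst • (ω : Eu (2*k+1)) + i p.snd‖^2 = _
      rw [WithLp.prod_norm_sq_eq_of_L2, norm_add_sq_real, norm_smul, hω, inner_smul_left, real_inner_comm, hi]
      simp
    exact (sq_eq_sq₀ (norm_nonneg _) (norm_nonneg _)).1 h1⟩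
  have hfin : Module.finrank ℝ (WithLp 2 (ℝ × Eu (2*k))) = Module.finrank ℝ (Eu (2*k+1)) := by
    rw [LinearEquiv.finrank_eq (WithLp.linearEquiv 2 ℝ (ℝ × Eu (2*k)))]
    simp; ring
  let Le := L1.toLinearIsometryEquiv hfin
  refine ⟨fun p => Le (WithLp.toLp 2 p), i, ?_, ?_, ?_, hi⟩
  · exact Le.measurePreserving.comp (WithLp.volume_preserving_toLp _ _)
  · exact Le.toHomeomorph.measurableEmbedding.comp (MeasurableEquiv.measurableEmbedding (MeasurableEquiv.toLp 2 (ℝ × Eu (2*k))))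
  · intro p
    rfl

end Slices

section Radial

theorem cs_int {f : ℝ → ℝ} (hf : Continuous f) (M : ℝ) (h : ∀ y, M < |y| → f y = 0) : Integrable f := by
  refine hf.integrable_of_hasCompactSupport (HasCompactSupport.intro (isCompact_closedBall (0:ℝ) M) ?_)
  intro y hy
  exact h y (by simpa using hy)

theorem radial_id (g : ℕ → ℝ → ℝ) (hd : ∀ j s, HasDerivAt (g j) (g (j+1) s) s) (hs : ∀ j s, 1 < |s| → g j s = 0) (m : ℕ) (s : ℝ) (k : ℕ) :
    ∫ y in Ioi (0:ℝ), y^(2*k+1) * g (k+1+m) (s + y^2/2) = (-1)^(k+1) * 2^k * (k.factorial : ℝ) * g m s := by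
  have hc : ∀ j, Continuous (g j) := fun j => continuous_iff_continuousAt.2 fun s => (hd j s).continuousAt
  have hvan : ∀ j y, 2 + 2 * |s| < |y| → g j (s + y^2/2) = 0 := by
    intro j y hy
    apply hs
    have h1 : y^2 = |y|^2 := (sq_abs y).symm
    have h2 := neg_abs_le s
    have h3 := abs_nonneg s
    refine lt_of_lt_of_le ?_ (le_abs_self _)
    rw [h1]
    nlinarith
  have hinteg : ∀ n j, IntegrableOn (fun y => y^n * g j (s + y^2/2)) (Ioi 0) := by
    intro n j
    have := hc j
    exact (cs_int (by fun_prop) (2+2*|s|) fun y hy => by rw [hvan j y hy, mul_zero]).integrableOn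
  have hlim : ∀ n j, Tendsto (fun y => y^n * g j (s + y^2/2)) atTop (nhds 0) := by
    intro n j
    refine tendsto_const_nhds.congr' ?_
    filter_upwards [eventually_gt_atTop (2+2*|s|)] with y hy
    rw [hvan j y (lt_of_lt_of_le hy (le_abs_self _)), mul_zero]
  have hdd : ∀ j y, HasDerivAt (fun y => g j (s + y^2/2)) (y * g (j+1) (s + y^2/2)) y := by
    intro j y
    have h1 : HasDerivAt (fun y : ℝ => s + y^2/2) y y := by
      exact (((hasDerivAt_pow 2 y).div_const 2).const_add s).congr_deriv (by norm_num)
    exact ((hd j (s+y^2/2)).comp y h1).congr_deriv (mul_comm _ _)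
  induction k with
  | zero =>
    have := integral_Ioi_of_hasDerivAt_of_tendsto' (f := fun y => g m (s + y^2/2)) (a := 0) (m := 0)
      (fun y _ => hdd m y) (by simpa using hinteg 1 (m+1)) (by simpa using hlim 0 m)
    simp only [zero_add, mul_zero, pow_one, add_comm 1 m]
    rw [this]; simp
  | succ k ih =>
    have h1 := integral_Ioi_of_hasDerivAt_of_tendsto' (f := fun y => y^(2*k+2) * g (k+1+m) (s + y^2/2)) (a := 0) (m := 0)
      (f' := fun y => (2*k+2 : ℝ) * (y^(2*k+1) * g (k+1+m) (s + y^2/2)) + y^(2*k+3) * g (k+1+m+1) (s+y^2/2))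
      (fun y _ => by
        refine ((hasDerivAt_pow (2*k+2) y).mul (hdd (k+1+m) y)).congr_deriv ?_
        push_cast
        ring)
      (((hinteg _ _).const_mul _).add (hinteg _ _)) (hlim _ _)
    rw [integral_add ((hinteg _ _).const_mul _) (hinteg _ _), integral_const_mul, ih] at h1
    have e1 : k + 1 + 1 + m = k+1+m+1 := by ring
    have e2 : 2 * (k+1)+1 = 2*k+3 := by ring
    rw [e1, e2, Nat.factorial_succ]
    push_cast
    have h0 : (0:ℝ)^(2*k+2) = 0 := by simp
    rw [h0] at h1
    rw [eq_sub_of_add_eq' h1]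
    ring

theorem gauss_id (g : ℕ → ℝ → ℝ) (hd : ∀ j s, HasDerivAt (g j) (g (j+1) s) s) (hs : ∀ j s, 1 < |s| → g j s = 0) (m : ℕ) (s : ℝ) (k : ℕ) (hk : 1 ≤ k) :
    ∫ z : Eu (2*k), g (k+m) (s + ‖z‖^2/2) = (-(2*Real.pi))^k * g m s := by
  obtain ⟨n, rfl⟩ := Nat.exists_eq_add_of_le' hk
  have : Nonempty (Fin (2*(n+1))) := ⟨⟨0, by omega⟩⟩
  have : Nontrivial (Eu (2*(n+1))) := inferInstance
  rw [integral_fun_norm_addHaar (μ := (volume : Measure (Eu (2*(n+1))))) (f := fun r => g (n+1+m) (s + r^2/2))]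
  have hf : Module.finrank ℝ (Eu (2*(n+1))) = 2*(n+1) := by simp
  rw [Measure.real, InnerProductSpace.volume_ball_of_dim_even (k := n+1) hf, hf]
  have e : 2*(n+1)-1 = 2*n+1 := by omega
  simp only [e, smul_eq_mul, nsmul_eq_mul]
  rw [radial_id g hd hs m s n]
  simp only [ENNReal.ofReal_one, one_pow, one_mul]
  rw [ENNReal.toReal_ofReal (by positivity), Nat.factorial_succ]
  have hn : (n.factorial : ℝ) ≠ 0 := by positivity
  have hn1 : (n:ℝ)+1 ≠ 0 := by positivity
  push_cast
  field_simp
  rw [neg_pow (2*Real.pi), mul_pow]; ring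

theorem parts_id (g : ℕ → ℝ → ℝ) (hd : ∀ j s, HasDerivAt (g j) (g (j+1) s) s) (hs : ∀ j s, 1 < |s| → g j s = 0) (m n : ℕ) (k : ℕ) :
    ∫ s, g (m+k) s * g n s = (-1)^k * ∫ s, g m s * g (n+k) s := by
  have hc : ∀ j, Continuous (g j) := fun j => continuous_iff_continuousAt.2 fun s => (hd j s).continuousAt
  have hinteg : ∀ i j, Integrable (fun y => g i y * g j y) := fun i j =>
    cs_int ((hc i).mul (hc j)) 1 fun y hy => by rw [hs i y hy, zero_mul]
  induction k generalizing n with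
  | zero => simp
  | succ k ih =>
    have := integral_mul_deriv_eq_deriv_mul_of_integrable (u := g (m+k)) (v := g n) (u' := g (m+k+1)) (v' := g (n+1))
      (fun x _ => hd _ x) (fun x _ => hd _ x) (hinteg _ _) (hinteg _ _) (hinteg _ _)
    rw [show m + (k+1) = m+k+1 by ring, show n + (k+1) = n+1+k by ring]
    rw [ih] at this
    rw [← neg_eq_iff_eq_neg.2 this.symm.symm]
    ring

end Radial

section Profile
open scoped RealInnerProductSpace

def spBase (k : ℕ) : Sp (2*k+1) := ⟨EuclideanSpace.single 0 1, by simp⟩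

def pr {k : ℕ} (x : Eu (2*k+1)) : Sp (2*k+1) :=
  ⟨if x = 0 then (spBase k : Eu (2*k+1)) else ‖x‖⁻¹ • x, by
    split_ifs with h
    · exact (spBase k).2
    · have : ‖x‖ ≠ 0 := norm_ne_zero_iff.2 h
      simp [norm_smul, this]⟩

theorem pr_coe {k : ℕ} {x : Eu (2*k+1)} (h : x ≠ 0) : (pr x : Eu (2*k+1)) = ‖x‖⁻¹ • x := by
  simp [pr, h]

theorem pr_smul {k : ℕ} (ω : Sp (2*k+1)) {r : ℝ} (hr : 0 < r) : pr (r • (ω : Eu (2*k+1))) = ω := by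
  have hω : ‖(ω : Eu (2*k+1))‖ = 1 := norm_eq_of_mem_sphere ω
  have h0 : (ω : Eu (2*k+1)) ≠ 0 := fun h => by simp [h] at hω
  apply Subtype.ext
  rw [pr_coe (smul_ne_zero hr.ne' h0), norm_smul, hω, smul_smul, mul_one, Real.norm_of_nonneg hr.le, inv_mul_cancel₀ hr.ne', one_smul]

theorem pr_measurable {k : ℕ} : Measurable (pr : Eu (2*k+1) → Sp (2*k+1)) := by
  unfold pr
  refine Measurable.subtype_mk ?_
  refine Measurable.ite (measurableSet_singleton 0) measurable_const ?_
  exact measurable_norm.inv.smul measurable_id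

def bb {k : ℕ} (D : ℝ → Sp (2*k+1) → ℝ) (c t : ℝ) (x : Eu (2*k+1)) : ℝ :=
  c * (‖x‖^k)⁻¹ * D (‖x‖ - t) (pr x)

theorem bb_measurable {k : ℕ} {D : ℝ → Sp (2*k+1) → ℝ} (hD : Continuous fun p : ℝ × Sp (2*k+1) => D p.1 p.2) (c t : ℝ) :
    Measurable (bb D c t) := by
  unfold bb
  refine Measurable.mul (by fun_prop) ?_
  exact hD.measurable.comp ((measurable_norm.sub_const t).prodMk pr_measurable)

theorem sup_bound {k : ℕ} {D : ℝ → Sp (2*k+1) → ℝ} (hD : Continuous fun p : ℝ × Sp (2*k+1) => D p.1 p.2)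
    (hs : ∀ s ω, 1 < |s| → D s ω = 0) : ∃ M, 0 ≤ M ∧ ∀ s ω, |D s ω| ≤ M := by
  have h1 : HasCompactSupport fun p : ℝ × Sp (2*k+1) => D p.1 p.2 := by
    refine HasCompactSupport.intro ((isCompact_closedBall (0:ℝ) 1).prod (isCompact_univ (X := Sp (2*k+1)))) ?_
    intro p hp
    apply hs
    by_contra h
    exact hp ⟨by simpa using not_lt.1 h, mem_univ _⟩
  obtain ⟨M, hM⟩ := h1.exists_bound_of_continuous hD
  exact ⟨M, (norm_nonneg _).trans (hM (0, spBase k)), fun s ω => hM (s, ω)⟩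

theorem bb_zero {k : ℕ} {D : ℝ → Sp (2*k+1) → ℝ} (hs : ∀ s ω, 1 < |s| → D s ω = 0) (c t : ℝ) (x : Eu (2*k+1))
    (h : 1 < |‖x‖ - t|) : bb D c t x = 0 := by
  simp [bb, hs _ _ h]

theorem bb_bound {k : ℕ} {D : ℝ → Sp (2*k+1) → ℝ} (hs : ∀ s ω, 1 < |s| → D s ω = 0) {M : ℝ} (hM0 : 0 ≤ M)
    (hM : ∀ s ω, |D s ω| ≤ M) (c t : ℝ) (ht : 2 ≤ t) (x : Eu (2*k+1)) : |bb D c t x| ≤ |c| * M := by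
  by_cases h : 1 < |‖x‖ - t|
  · rw [bb_zero hs c t x h]; simp; positivity
  · have h1 : 1 ≤ ‖x‖ := by
      have := (abs_le.1 (not_lt.1 h)).1
      linarith
    unfold bb
    rw [abs_mul, abs_mul]
    have h2 : |(‖x‖^k)⁻¹| ≤ 1 := by
      rw [abs_of_nonneg (by positivity)]
      exact inv_le_one_of_one_le₀ (one_le_pow₀ h1)
    have h3 := hM (‖x‖ - t) (pr x)
    calc |c| * |(‖x‖^k)⁻¹| * |D (‖x‖ - t) (pr x)| ≤ |c| * 1 * M := by gcongr
      _ = _ := by ring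

theorem int_of_bdd {k : ℕ} {f : Eu (2*k+1) → ℝ} (hf : Measurable f) (C ρ : ℝ) (hC : ∀ x, |f x| ≤ C) (hz : ∀ x, ρ < ‖x‖ → f x = 0) :
    Integrable f := by
  have h1 : IntegrableOn f (closedBall 0 ρ) :=
    Measure.integrableOn_of_bounded (M := C) (measure_closedBall_lt_top.ne) hf.aestronglyMeasurable (Eventually.of_forall hC)
  rw [integrableOn_iff_integrable_of_support_subset] at h1
  · exact h1
  · intro x hx
    by_contra h
    exact hx (hz x (by simpa using h))

theorem bb_sq_integrable {k : ℕ} {D : ℝ → Sp (2*k+1) → ℝ} (hD : Continuous fun p : ℝ × Sp (2*k+1) => D p.1 p.2)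
    (hs : ∀ s ω, 1 < |s| → D s ω = 0) (c t : ℝ) (ht : 2 ≤ t) : Integrable fun x => (bb D c t x)^2 := by
  obtain ⟨M, hM0, hM⟩ := sup_bound hD hs
  refine int_of_bdd ((bb_measurable hD c t).pow_const 2) ((|c| * M)^2) (t+1) ?_ ?_
  · intro x
    rw [abs_pow]
    exact pow_le_pow_left₀ (abs_nonneg _) (bb_bound hs hM0 hM c t ht x) 2
  · intro x hx
    rw [bb_zero hs]
    · simp
    · rw [lt_abs]; left; linarith

theorem bb_polar {k : ℕ} {D : ℝ → Sp (2*k+1) → ℝ} (hD : Continuous fun p : ℝ × Sp (2*k+1) => D p.1 p.2)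
    (hs : ∀ s ω, 1 < |s| → D s ω = 0) (c t : ℝ) (ht : 2 ≤ t) (a : ℝ) (ha : 0 < a) :
    ∫ x in {x : Eu (2*k+1) | a ≤ ‖x‖}, (bb D c t x)^2 = c^2 * ∫ ω : Sp (2*k+1), (∫ s in Ici (a - t), (D s ω)^2) ∂(sg (2*k+1)) := by
  have hms : MeasurableSet {x : Eu (2*k+1) | a ≤ ‖x‖} := measurableSet_le measurable_const measurable_norm
  rw [← integral_indicator hms]
  have := (polar_aux (N := 2*k+1) _ ((bb_sq_integrable hD hs c t ht).indicator hms)).2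
  rw [this, ← integral_const_mul]
  congr 1; ext ω
  rw [← integral_indicator measurableSet_Ioi, ← integral_indicator measurableSet_Ici, ← integral_const_mul,
    ← integral_sub_right_eq_self (fun s => c^2 * (Ici (a-t)).indicator (fun s => D s ω ^ 2) s) t]
  congr 1; ext r
  have hω : ‖(ω : Eu (2*k+1))‖ = 1 := norm_eq_of_mem_sphere ω
  by_cases hr : a ≤ r
  · have hr0 : 0 < r := ha.trans_le hr
    have e1 : r - t ∈ Ici (a-t) := by simpa using hr
    have e2 : ‖r • (ω : Eu (2*k+1))‖ = r := by rw [norm_smul, hω, mul_one, Real.norm_of_nonneg hr0.le]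
    have e3 : r • (ω : Eu (2*k+1)) ∈ {x : Eu (2*k+1) | a ≤ ‖x‖} := by
      show a ≤ ‖r • (ω : Eu (2*k+1))‖
      rw [e2]; exact hr
    rw [indicator_of_mem e1, indicator_of_mem (show r ∈ Ioi (0:ℝ) from hr0), indicator_of_mem e3]
    unfold bb
    rw [pr_smul ω hr0, e2]
    simp only [Nat.add_sub_cancel, smul_eq_mul]
    have : r^(2*k) = (r^k)^2 := by rw [← pow_mul, mul_comm]
    rw [this]
    field_simp
  · have e1 : r - t ∉ Ici (a-t) := by simpa using hr
    rw [indicator_of_notMem e1, mul_zero]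
    by_cases hr0 : 0 < r
    · have e2 : ‖r • (ω : Eu (2*k+1))‖ = r := by rw [norm_smul, hω, mul_one, Real.norm_of_nonneg hr0.le]
      have e3 : r • (ω : Eu (2*k+1)) ∉ {x : Eu (2*k+1) | a ≤ ‖x‖} := by
        show ¬ (a ≤ ‖r • (ω : Eu (2*k+1))‖)
        rw [e2]; exact hr
      rw [indicator_of_mem (show r ∈ Ioi (0:ℝ) from hr0), indicator_of_notMem e3, smul_zero]
    · rw [indicator_of_notMem (show r ∉ Ioi (0:ℝ) from hr0)]

theorem D_sq_int {k : ℕ} {D : ℝ → Sp (2*k+1) → ℝ} (hD : Continuous fun p : ℝ × Sp (2*k+1) => D p.1 p.2)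
    (hs : ∀ s ω, 1 < |s| → D s ω = 0) (ω : Sp (2*k+1)) : Integrable (fun s => (D s ω)^2) := by
  refine cs_int ?_ 1 ?_
  · exact (cont_comp2 hD continuous_id continuous_const).pow 2
  · intro y hy; rw [hs _ _ hy]; simp

theorem bb_energy_full {k : ℕ} {D : ℝ → Sp (2*k+1) → ℝ} (hD : Continuous fun p : ℝ × Sp (2*k+1) => D p.1 p.2)
    (hs : ∀ s ω, 1 < |s| → D s ω = 0) (c t : ℝ) (ht : 3 ≤ t) :
    ∫ x, (bb D c t x)^2 = c^2 * ∫ ω : Sp (2*k+1), (∫ s, (D s ω)^2) ∂(sg (2*k+1)) := by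
  have h := bb_polar hD hs c t (by linarith) 1 one_pos
  have e1 : ∫ x in {x : Eu (2*k+1) | 1 ≤ ‖x‖}, (bb D c t x)^2 = ∫ x, (bb D c t x)^2 := by
    apply setIntegral_eq_integral_of_forall_compl_eq_zero
    intro x hx
    have hx' : ‖x‖ < 1 := not_le.1 hx
    rw [bb_zero hs]
    · simp
    · rw [lt_abs]; right; linarith
  rw [← e1, h]
  congr 2; ext ω
  apply setIntegral_eq_integral_of_forall_compl_eq_zero
  intro s hx
  have hx' : s < 1 - t := not_le.1 hx
  rw [hs]
  · simp
  · rw [lt_abs]; right; linarith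

theorem bb_energy_ext {k : ℕ} {D : ℝ → Sp (2*k+1) → ℝ} (hD : Continuous fun p : ℝ × Sp (2*k+1) => D p.1 p.2)
    (hs : ∀ s ω, 1 < |s| → D s ω = 0) (hp : ∀ s ω, (D (-s) (-ω))^2 = (D s ω)^2) (c t : ℝ) (ht : 3 ≤ t) :
    ∫ x in {x : Eu (2*k+1) | t ≤ ‖x‖}, (bb D c t x)^2 = c^2 * ((1/2) * ∫ ω : Sp (2*k+1), (∫ s, (D s ω)^2) ∂(sg (2*k+1))) := by
  rw [bb_polar hD hs c t (by linarith) t (by linarith), sub_self]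
  congr 1
  obtain ⟨M, hM0, hM⟩ := sup_bound hD hs
  have hcont : ∀ S : Set ℝ, MeasurableSet S → Integrable (fun ω : Sp (2*k+1) => ∫ s in S, (D s ω)^2) (sg (2*k+1)) := by
    intro S hS
    have e : ∀ ω : Sp (2*k+1), ∫ s in S, (D s ω)^2 = ∫ s in S ∩ Icc (-1) 1, (D s ω)^2 := by
      intro ω
      rw [← integral_indicator hS, ← integral_indicator (hS.inter measurableSet_Icc)]
      congr 1; ext s
      rw [inter_comm, ← indicator_indicator]
      by_cases hh : s ∈ Icc (-1:ℝ) 1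
      · rw [indicator_of_mem hh]
      · rw [indicator_of_notMem hh]
        have : 1 < |s| := by
          by_contra h; exact hh (abs_le.1 (not_lt.1 h))
        simp [indicator, hs s ω this]
    simp_rw [e]
    apply sp_int
    have := continuous_of_dominated (μ := volume.restrict (S ∩ Icc (-1:ℝ) 1)) (F := fun (ω : Sp (2*k+1)) s => (D s ω)^2) (bound := fun _ => M^2)
      (fun ω => ((cont_comp2 hD continuous_id continuous_const).pow 2).aestronglyMeasurable)
      (fun ω => Eventually.of_forall fun s => by
        rw [Real.norm_eq_abs, abs_pow]
        exact pow_le_pow_left₀ (abs_nonneg _) (hM _ _) 2)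
      (by
        refine (integrableOn_const (measure_ne_top_of_subset inter_subset_right ?_))
        simp)
      (Eventually.of_forall fun s => (cont_comp2 hD continuous_const continuous_id).pow 2)
    exact this
  have e1 : ∫ ω : Sp (2*k+1), (∫ s in Ici (0:ℝ), (D s ω)^2) ∂(sg (2*k+1)) = ∫ ω : Sp (2*k+1), (∫ s in Iio (0:ℝ), (D s ω)^2) ∂(sg (2*k+1)) := by
    rw [← sg_integral_neg]
    congr 1; ext ω
    rw [integral_Ici_eq_integral_Ioi, ← integral_Iic_eq_integral_Iio]
    have := integral_comp_neg_Iic (0:ℝ) (fun s => (D s (-ω))^2)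
    rw [neg_zero] at this
    rw [← this]
    congr 1; ext s
    exact hp s ω
  have e2 : ∫ ω : Sp (2*k+1), (∫ s, (D s ω)^2) ∂(sg (2*k+1)) = ∫ ω : Sp (2*k+1), (∫ s in Ici (0:ℝ), (D s ω)^2) ∂(sg (2*k+1)) + ∫ ω : Sp (2*k+1), (∫ s in Iio (0:ℝ), (D s ω)^2) ∂(sg (2*k+1)) := by
    rw [← integral_add (hcont _ measurableSet_Ici) (hcont _ measurableSet_Iio)]
    congr 1; ext ω
    rw [← integral_add_compl measurableSet_Ici (D_sq_int hD hs ω), compl_Ici]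
  rw [e2, ← e1]; ring

end Profile

section Pairing
open scoped RealInnerProductSpace

theorem prod_subst {k : ℕ} (h : ℝ × Eu (2*k) → ℝ) (hh : Integrable h) (t : ℝ) (ht : 0 < t)
    (hh2 : Integrable fun p : ℝ × Eu (2*k) => t^k * h (t + p.1, √t • p.2)) :
    ∫ p, h p = ∫ p : ℝ × Eu (2*k), t^k * h (t + p.1, √t • p.2) := by
  have e1 : ∫ p, h p = ∫ a : ℝ, ∫ y : Eu (2*k), h (a, y) := integral_prod _ hh
  have e2 : (∫ p : ℝ × Eu (2*k), t^k * h (t + p.1, √t • p.2)) = ∫ a : ℝ, ∫ y : Eu (2*k), t^k * h (t + a, √t • y) := integral_prod _ hh2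
  rw [e1, e2, ← integral_add_left_eq_self _ t]
  congr 1; ext s
  rw [integral_const_mul]
  have := Measure.integral_comp_smul (volume : Measure (Eu (2*k))) (fun y => h (t + s, y)) (√t)
  rw [this]
  have hf : Module.finrank ℝ (Eu (2*k)) = 2*k := by simp
  rw [hf, pow_mul, Real.sq_sqrt ht.le, abs_of_pos (by positivity), smul_eq_mul, ← mul_assoc, mul_inv_cancel₀ (by positivity), one_mul]

def gJ {k : ℕ} (D f : ℝ → Sp (2*k+1) → ℝ) (c t : ℝ) (ω : Sp (2*k+1)) (x : Eu (2*k+1)) : ℝ :=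
  bb D c t x * (1 + ⟪(pr x : Eu (2*k+1)), (ω : Eu (2*k+1))⟫) * f (⟪x, (ω : Eu (2*k+1))⟫ - t) ω

theorem gJ_measurable2 {k : ℕ} {D f : ℝ → Sp (2*k+1) → ℝ} (hD : Continuous fun p : ℝ × Sp (2*k+1) => D p.1 p.2)
    (hf : Continuous fun p : ℝ × Sp (2*k+1) => f p.1 p.2) (c t : ℝ) :
    Measurable (fun p : Eu (2*k+1) × Sp (2*k+1) => gJ D f c t p.2 p.1) := by
  unfold gJ
  refine Measurable.mul (Measurable.mul ((bb_measurable hD c t).comp measurable_fst) ?_) ?_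
  · refine measurable_const.add ?_
    have h1 : Measurable fun p : Eu (2*k+1) × Sp (2*k+1) => (pr p.1 : Eu (2*k+1)) :=
      measurable_subtype_coe.comp (pr_measurable.comp measurable_fst)
    have h2 : Measurable fun p : Eu (2*k+1) × Sp (2*k+1) => (p.2 : Eu (2*k+1)) :=
      measurable_subtype_coe.comp measurable_snd
    exact h1.inner h2
  · have h3 : Continuous fun p : Eu (2*k+1) × Sp (2*k+1) => f (⟪p.1, (p.2 : Eu (2*k+1))⟫ - t) p.2 :=
      cont_comp2 hf (by fun_prop) (by fun_prop)
    exact h3.measurable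

theorem gJ_measurable {k : ℕ} {D f : ℝ → Sp (2*k+1) → ℝ} (hD : Continuous fun p : ℝ × Sp (2*k+1) => D p.1 p.2)
    (hf : Continuous fun p : ℝ × Sp (2*k+1) => f p.1 p.2) (c t : ℝ) (ω : Sp (2*k+1)) :
    Measurable (gJ D f c t ω) := by
  have h : Measurable fun x : Eu (2*k+1) => (x, ω) := measurable_prodMk_right
  have h2 := (gJ_measurable2 hD hf c t).comp h
  exact h2

theorem inner_sp_le {k : ℕ} (a b : Sp (2*k+1)) : |1 + ⟪(a : Eu (2*k+1)), (b : Eu (2*k+1))⟫| ≤ 2 := by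
  have h1 := abs_real_inner_le_norm (a : Eu (2*k+1)) (b : Eu (2*k+1))
  rw [norm_eq_of_mem_sphere, norm_eq_of_mem_sphere, mul_one] at h1
  calc _ ≤ |(1:ℝ)| + |⟪(a : Eu (2*k+1)), (b : Eu (2*k+1))⟫| := abs_add_le _ _
    _ ≤ 2 := by rw [abs_one]; linarith

theorem gJ_bound {k : ℕ} {D f : ℝ → Sp (2*k+1) → ℝ} (hsD : ∀ s ω, 1 < |s| → D s ω = 0)
    {M M' : ℝ} (hM0 : 0 ≤ M) (hM : ∀ s ω, |D s ω| ≤ M) (hM0' : 0 ≤ M') (hM' : ∀ s ω, |f s ω| ≤ M')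
    (c t : ℝ) (ht : 2 ≤ t) (ω : Sp (2*k+1)) (x : Eu (2*k+1)) : |gJ D f c t ω x| ≤ |c| * M * 2 * M' := by
  unfold gJ
  rw [abs_mul, abs_mul]
  have h1 := bb_bound hsD hM0 hM c t ht x
  have h2 := inner_sp_le (pr x) ω
  have h3 := hM' (⟪x, (ω : Eu (2*k+1))⟫ - t) ω
  gcongr

theorem gJ_zero {k : ℕ} {D f : ℝ → Sp (2*k+1) → ℝ} (hsD : ∀ s ω, 1 < |s| → D s ω = 0)
    (c t : ℝ) (ω : Sp (2*k+1)) (x : Eu (2*k+1)) (hx : t + 1 < ‖x‖) : gJ D f c t ω x = 0 := by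
  unfold gJ
  rw [bb_zero hsD, zero_mul, zero_mul]
  rw [lt_abs]; left; linarith

theorem gJ_integrable {k : ℕ} {D f : ℝ → Sp (2*k+1) → ℝ} (hD : Continuous fun p : ℝ × Sp (2*k+1) => D p.1 p.2)
    (hf : Continuous fun p : ℝ × Sp (2*k+1) => f p.1 p.2)
    (hsD : ∀ s ω, 1 < |s| → D s ω = 0) (hsf : ∀ s ω, 1 < |s| → f s ω = 0)
    (c t : ℝ) (ht : 2 ≤ t) (ω : Sp (2*k+1)) : Integrable (gJ D f c t ω) := by
  obtain ⟨M, hM0, hM⟩ := sup_bound hD hsD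
  obtain ⟨M', hM0', hM'⟩ := sup_bound hf hsf
  exact int_of_bdd (gJ_measurable hD hf c t ω) _ (t+1) (gJ_bound hsD hM0 hM hM0' hM' c t ht ω) (fun x hx => gJ_zero hsD c t ω x hx)

/-- Norm of the sliced point. -/
theorem slice_norm {k : ℕ} (ω : Sp (2*k+1)) (i : Eu (2*k) →ₗᵢ[ℝ] Eu (2*k+1)) (hi : ∀ y, ⟪i y, (ω : Eu (2*k+1))⟫ = 0)
    (a : ℝ) (y : Eu (2*k)) : ‖a • (ω : Eu (2*k+1)) + i y‖^2 = a^2 + ‖y‖^2 := by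
  have hω : ‖(ω : Eu (2*k+1))‖ = 1 := norm_eq_of_mem_sphere ω
  rw [norm_add_sq_real, norm_smul, hω, inner_smul_left, real_inner_comm, hi]
  simp

theorem slice_inner {k : ℕ} (ω : Sp (2*k+1)) (i : Eu (2*k) →ₗᵢ[ℝ] Eu (2*k+1)) (hi : ∀ y, ⟪i y, (ω : Eu (2*k+1))⟫ = 0)
    (a : ℝ) (y : Eu (2*k)) : ⟪a • (ω : Eu (2*k+1)) + i y, (ω : Eu (2*k+1))⟫ = a := by
  have hω : ‖(ω : Eu (2*k+1))‖ = 1 := norm_eq_of_mem_sphere ω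
  rw [inner_add_left, hi, inner_smul_left, real_inner_self_eq_norm_sq, hω]
  simp

theorem scaled_bound {k : ℕ} {D f : ℝ → Sp (2*k+1) → ℝ} (hsD : ∀ s ω, 1 < |s| → D s ω = 0) (hsf : ∀ s ω, 1 < |s| → f s ω = 0)
    {M M' : ℝ} (hM0 : 0 ≤ M) (hM : ∀ s ω, |D s ω| ≤ M) (hM0' : 0 ≤ M') (hM' : ∀ s ω, |f s ω| ≤ M')
    (c t : ℝ) (ht : 2 ≤ t) (ω : Sp (2*k+1))
    (i : Eu (2*k) →ₗᵢ[ℝ] Eu (2*k+1)) (hi : ∀ y, ⟪i y, (ω : Eu (2*k+1))⟫ = 0) (p : ℝ × Eu (2*k)) :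
    |t^k * gJ D f c t ω ((t + p.1) • (ω : Eu (2*k+1)) + i (√t • p.2))| ≤
      (Icc (-1:ℝ) 1 ×ˢ closedBall (0 : Eu (2*k)) 2).indicator (fun _ => |c| * 2^k * M * 2 * M') p := by
  set x := (t + p.1) • (ω : Eu (2*k+1)) + i (√t • p.2) with hx
  have hin : ⟪x, (ω : Eu (2*k+1))⟫ = t + p.1 := slice_inner ω i hi _ _
  have hno : ‖x‖^2 = (t+p.1)^2 + t * ‖p.2‖^2 := by
    rw [hx, slice_norm ω i hi, norm_smul, mul_pow, Real.norm_of_nonneg (Real.sqrt_nonneg t), Real.sq_sqrt (by linarith)]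
  have hnn : 0 ≤ (Icc (-1:ℝ) 1 ×ˢ closedBall (0 : Eu (2*k)) 2).indicator (fun _ => |c| * 2^k * M * 2 * M') p :=
    indicator_nonneg (fun _ _ => by positivity) p
  by_cases h1 : 1 < |p.1|
  · have : gJ D f c t ω x = 0 := by
      unfold gJ
      rw [hin, add_sub_cancel_left, hsf _ _ h1, mul_zero]
    rw [this, mul_zero, abs_zero]; exact hnn
  by_cases h2 : 1 < |‖x‖ - t|
  · have : gJ D f c t ω x = 0 := by
      unfold gJ
      rw [bb_zero hsD c t x h2, zero_mul, zero_mul]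
    rw [this, mul_zero, abs_zero]; exact hnn
  have h1' := abs_le.1 (not_lt.1 h1)
  have h2' := abs_le.1 (not_lt.1 h2)
  have hz : ‖p.2‖ ≤ 2 := by
    have a1 : ‖x‖^2 ≤ (t+1)^2 := pow_le_pow_left₀ (norm_nonneg _) (by linarith) 2
    have a2 : (t-1)^2 ≤ (t+p.1)^2 := pow_le_pow_left₀ (by linarith) (by linarith) 2
    have a3 : t * ‖p.2‖^2 ≤ t * 4 := by nlinarith
    have a4 : ‖p.2‖^2 ≤ 4 := le_of_mul_le_mul_left a3 (by linarith)
    nlinarith [norm_nonneg p.2]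
  have hmem : p ∈ Icc (-1:ℝ) 1 ×ˢ closedBall (0 : Eu (2*k)) 2 := ⟨h1', by simpa using hz⟩
  rw [indicator_of_mem hmem]
  have hxp : 0 < ‖x‖ := by linarith
  have e : t^k * gJ D f c t ω x = c * (t/‖x‖)^k * D (‖x‖ - t) (pr x) * (1 + ⟪(pr x : Eu (2*k+1)), (ω : Eu (2*k+1))⟫) * f (⟪x, (ω : Eu (2*k+1))⟫ - t) ω := by
    unfold gJ bb
    rw [div_pow]; ring
  rw [e, abs_mul, abs_mul, abs_mul, abs_mul]
  have b1 : |(t/‖x‖)^k| ≤ 2^k := by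
    rw [abs_of_nonneg (by positivity)]
    refine pow_le_pow_left₀ (by positivity) ?_ k
    rw [div_le_iff₀ hxp]; linarith
  have b2 := inner_sp_le (pr x) ω
  have b3 := hM' (⟪x, (ω : Eu (2*k+1))⟫ - t) ω
  have b4 := hM (‖x‖ - t) (pr x)
  gcongr

theorem scaled_limit {k : ℕ} {D f : ℝ → Sp (2*k+1) → ℝ} (hD : Continuous fun p : ℝ × Sp (2*k+1) => D p.1 p.2)
    (c : ℝ) (ω : Sp (2*k+1))
    (i : Eu (2*k) →ₗᵢ[ℝ] Eu (2*k+1)) (hi : ∀ y, ⟪i y, (ω : Eu (2*k+1))⟫ = 0) (p : ℝ × Eu (2*k)) :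
    Tendsto (fun t : ℝ => t^k * gJ D f c t ω ((t + p.1) • (ω : Eu (2*k+1)) + i (√t • p.2))) atTop
      (nhds (2 * c * D (p.1 + ‖p.2‖^2/2) ω * f p.1 ω)) := by
  set x : ℝ → Eu (2*k+1) := fun t => (t + p.1) • (ω : Eu (2*k+1)) + i (√t • p.2) with hx
  have hω : ‖(ω : Eu (2*k+1))‖ = 1 := norm_eq_of_mem_sphere ω
  have hin : ∀ t, ⟪x t, (ω : Eu (2*k+1))⟫ = t + p.1 := fun t => slice_inner ω i hi _ _
  have hno : ∀ t, 0 < t → ‖x t‖^2 = (t+p.1)^2 + t * ‖p.2‖^2 := by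
    intro t ht
    simp only [hx]
    rw [slice_norm ω i hi, norm_smul, mul_pow, Real.norm_of_nonneg (Real.sqrt_nonneg t), Real.sq_sqrt ht.le]
  have l0 : ∀ a : ℝ, Tendsto (fun t : ℝ => a / t) atTop (nhds 0) := fun a => tendsto_const_nhds.div_atTop tendsto_id
  have l1 : Tendsto (fun t => ‖x t‖ / t) atTop (nhds 1) := by
    have h1 : Tendsto (fun t : ℝ => √((1 + p.1/t)^2 + ‖p.2‖^2/t)) atTop (nhds (√((1+0)^2+0))) :=
      ((((tendsto_const_nhds).add (l0 _)).pow 2).add (l0 _)).sqrt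
    rw [show √((1+(0:ℝ))^2+0) = 1 by norm_num] at h1
    refine h1.congr' ?_
    filter_upwards [eventually_gt_atTop 0] with t ht
    rw [Real.sqrt_eq_iff_mul_self_eq (by positivity) (by positivity), ← sq, div_pow, hno t ht]
    field_simp
  have l2 : Tendsto (fun t => t / ‖x t‖) atTop (nhds 1) := by
    have := l1.inv₀ one_ne_zero
    rw [inv_one] at this
    exact this.congr fun t => by rw [inv_div]
  have l3 : Tendsto (fun t => ‖x t‖ - t) atTop (nhds (p.1 + ‖p.2‖^2/2)) := by
    have h1 : Tendsto (fun t : ℝ => (2*p.1 + p.1^2/t + ‖p.2‖^2) / (‖x t‖/t + 1)) atTop (nhds ((2*p.1 + 0 + ‖p.2‖^2)/(1+1))) :=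
      ((tendsto_const_nhds.add (l0 _)).add tendsto_const_nhds).div (l1.add tendsto_const_nhds) (by norm_num)
    rw [show (2*p.1 + 0 + ‖p.2‖^2)/(1+1) = p.1 + ‖p.2‖^2/2 by ring] at h1
    refine h1.congr' ?_
    filter_upwards [eventually_gt_atTop 0] with t ht
    have hp : ‖x t‖/t + 1 ≠ 0 := by positivity
    rw [div_eq_iff hp]
    have := hno t ht
    field_simp
    nlinarith
  have hne : ∀ᶠ t in atTop, x t ≠ 0 := by
    filter_upwards [eventually_gt_atTop (-p.1)] with t ht h0
    have := hin t
    rw [h0, inner_zero_left] at this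
    linarith
  have l4 : Tendsto (fun t => pr (x t)) atTop (nhds ω) := by
    rw [tendsto_subtype_rng]
    have h2 : Tendsto (fun t : ℝ => √t / t) atTop (nhds 0) := by
      have := tendsto_inv_atTop_zero.comp Real.tendsto_sqrt_atTop
      refine this.congr' ?_
      filter_upwards with t
      simp [Real.sqrt_div_self]
    have h1 : Tendsto (fun t : ℝ => ((1 + p.1/t) * (t/‖x t‖)) • (ω : Eu (2*k+1)) + ((√t/t) * (t/‖x t‖)) • i p.2) atTop
        (nhds (((1+0)*1 : ℝ) • (ω : Eu (2*k+1)) + ((0:ℝ)*1) • i p.2)) :=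
      (((tendsto_const_nhds.add (l0 _)).mul l2).smul_const _).add ((h2.mul l2).smul_const _)
    rw [show (((1+0)*1 : ℝ) • (ω : Eu (2*k+1)) + ((0:ℝ)*1) • i p.2) = (ω : Eu (2*k+1)) by simp] at h1
    refine h1.congr' ?_
    filter_upwards [hne, eventually_gt_atTop 0] with t h0 ht
    have hxp : ‖x t‖ ≠ 0 := norm_ne_zero_iff.2 h0
    rw [pr_coe h0]
    show _ = ‖x t‖⁻¹ • ((t + p.1) • (ω : Eu (2*k+1)) + i (√t • p.2))
    rw [map_smul, smul_add, smul_smul, smul_smul]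
    congr 2
    · field_simp
    · field_simp
  have l5 : Tendsto (fun t => ⟪(pr (x t) : Eu (2*k+1)), (ω : Eu (2*k+1))⟫) atTop (nhds 1) := by
    have h1 : Continuous fun a : Sp (2*k+1) => ⟪(a : Eu (2*k+1)), (ω : Eu (2*k+1))⟫ := by fun_prop
    have := (h1.tendsto ω).comp l4
    rw [real_inner_self_eq_norm_sq, hω, one_pow] at this
    exact this
  have l6 : Tendsto (fun t => D (‖x t‖ - t) (pr (x t))) atTop (nhds (D (p.1 + ‖p.2‖^2/2) ω)) :=
    (hD.tendsto (p.1 + ‖p.2‖^2/2, ω)).comp (l3.prodMk_nhds l4)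
  have l7 : Tendsto (fun t => c * (t/‖x t‖)^k * D (‖x t‖ - t) (pr (x t)) * (1 + ⟪(pr (x t) : Eu (2*k+1)), (ω : Eu (2*k+1))⟫) * f p.1 ω) atTop
      (nhds (c * 1^k * D (p.1 + ‖p.2‖^2/2) ω * (1 + 1) * f p.1 ω)) :=
    (((tendsto_const_nhds.mul (l2.pow k)).mul l6).mul (tendsto_const_nhds.add l5)).mul tendsto_const_nhds
  rw [show c * 1^k * D (p.1 + ‖p.2‖^2/2) ω * (1 + 1) * f p.1 ω = 2 * c * D (p.1 + ‖p.2‖^2/2) ω * f p.1 ω by rw [one_pow]; ring] at l7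
  refine l7.congr fun t => ?_
  show _ = t^k * gJ D f c t ω (x t)
  unfold gJ bb
  rw [hin t, add_sub_cancel_left, div_pow]; ring

theorem box_int {k : ℕ} (C : ℝ) : Integrable ((Icc (-1:ℝ) 1 ×ˢ closedBall (0 : Eu (2*k)) 2).indicator (fun _ => C)) := by
  rw [integrable_indicator_iff (measurableSet_Icc.prod measurableSet_closedBall)]
  refine integrableOn_const ?_
  exact (isCompact_Icc.prod (isCompact_closedBall _ _)).measure_lt_top.ne

theorem J_main {k : ℕ} {D f : ℝ → Sp (2*k+1) → ℝ} (hD : Continuous fun p : ℝ × Sp (2*k+1) => D p.1 p.2)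
    (hf : Continuous fun p : ℝ × Sp (2*k+1) => f p.1 p.2)
    (hsD : ∀ s ω, 1 < |s| → D s ω = 0) (hsf : ∀ s ω, 1 < |s| → f s ω = 0) (c : ℝ) :
    (∃ C, ∀ t, 2 ≤ t → ∀ ω, |∫ x, gJ D f c t ω x| ≤ C) ∧
    ∀ ω, Tendsto (fun t => ∫ x, gJ D f c t ω x) atTop (nhds (∫ p : ℝ × Eu (2*k), 2 * c * D (p.1 + ‖p.2‖^2/2) ω * f p.1 ω)) := by
  obtain ⟨M, hM0, hM⟩ := sup_bound hD hsD
  obtain ⟨M', hM0', hM'⟩ := sup_bound hf hsf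
  set BD : ℝ × Eu (2*k) → ℝ := (Icc (-1:ℝ) 1 ×ˢ closedBall (0 : Eu (2*k)) 2).indicator (fun _ => |c| * 2^k * M * 2 * M') with hBD
  have hBi : Integrable BD := box_int _
  have key : ∀ ω : Sp (2*k+1), ∃ (i : Eu (2*k) →ₗᵢ[ℝ] Eu (2*k+1)), (∀ y, ⟪i y, (ω : Eu (2*k+1))⟫ = 0) ∧
      ∀ t, 2 ≤ t → (Integrable (fun p : ℝ × Eu (2*k) => t^k * gJ D f c t ω ((t + p.1) • (ω : Eu (2*k+1)) + i (√t • p.2)))) ∧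
        ∫ x, gJ D f c t ω x = ∫ p : ℝ × Eu (2*k), t^k * gJ D f c t ω ((t + p.1) • (ω : Eu (2*k+1)) + i (√t • p.2)) := by
    intro ω
    obtain ⟨T, i, hT1, hT2, hT3, hi⟩ := slice_exists ω
    refine ⟨i, hi, fun t ht => ?_⟩
    have hI : Integrable (fun p : ℝ × Eu (2*k) => t^k * gJ D f c t ω ((t + p.1) • (ω : Eu (2*k+1)) + i (√t • p.2))) := by
      refine hBi.mono' ?_ (Eventually.of_forall fun p => scaled_bound hsD hsf hM0 hM hM0' hM' c t ht ω i hi p)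
      have hc : Continuous fun p : ℝ × Eu (2*k) => (t + p.1) • (ω : Eu (2*k+1)) + i (√t • p.2) := by
        have := i.continuous
        fun_prop
      exact (measurable_const.mul ((gJ_measurable hD hf c t ω).comp hc.measurable)).aestronglyMeasurable
    refine ⟨hI, ?_⟩
    rw [← hT1.integral_comp hT2]
    have h2 := prod_subst (fun p => gJ D f c t ω (T p)) ((hT1.integrable_comp_emb hT2).2 (gJ_integrable hD hf hsD hsf c t ht ω)) t (by linarith)
      (by simpa only [hT3] using hI)
    rw [h2]
    simp only [hT3]
  refine ⟨⟨∫ p, BD p, fun t ht ω => ?_⟩, fun ω => ?_⟩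
  · obtain ⟨i, hi, h⟩ := key ω
    rw [(h t ht).2, ← Real.norm_eq_abs]
    exact norm_integral_le_of_norm_le hBi (Eventually.of_forall fun p => scaled_bound hsD hsf hM0 hM hM0' hM' c t ht ω i hi p)
  · obtain ⟨i, hi, h⟩ := key ω
    have h1 : Tendsto (fun t => ∫ p : ℝ × Eu (2*k), t^k * gJ D f c t ω ((t + p.1) • (ω : Eu (2*k+1)) + i (√t • p.2))) atTop
        (nhds (∫ p : ℝ × Eu (2*k), 2 * c * D (p.1 + ‖p.2‖^2/2) ω * f p.1 ω)) := by
      refine tendsto_integral_filter_of_dominated_convergence BD ?_ ?_ hBi ?_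
      · filter_upwards [eventually_ge_atTop 2] with t ht
        exact (h t ht).1.aestronglyMeasurable
      · filter_upwards [eventually_ge_atTop 2] with t ht
        exact Eventually.of_forall fun p => scaled_bound hsD hsf hM0 hM hM0' hM' c t ht ω i hi p
      · exact Eventually.of_forall fun p => scaled_limit hD c ω i hi p
    refine h1.congr' ?_
    filter_upwards [eventually_ge_atTop 2] with t ht
    exact (h t ht).2.symm

end Pairing

section Pairing2
open scoped RealInnerProductSpace

theorem J_int_tendsto {k : ℕ} {D f : ℝ → Sp (2*k+1) → ℝ} (hD : Continuous fun p : ℝ × Sp (2*k+1) => D p.1 p.2)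
    (hf : Continuous fun p : ℝ × Sp (2*k+1) => f p.1 p.2)
    (hsD : ∀ s ω, 1 < |s| → D s ω = 0) (hsf : ∀ s ω, 1 < |s| → f s ω = 0) (c : ℝ) :
    Tendsto (fun t => ∫ ω : Sp (2*k+1), (∫ x, gJ D f c t ω x) ∂(sg (2*k+1))) atTop
      (nhds (∫ ω : Sp (2*k+1), (∫ p : ℝ × Eu (2*k), 2 * c * D (p.1 + ‖p.2‖^2/2) ω * f p.1 ω) ∂(sg (2*k+1)))) := by
  obtain ⟨⟨C, hC⟩, hl⟩ := J_main hD hf hsD hsf c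
  refine tendsto_integral_filter_of_dominated_convergence (fun _ => C) ?_ ?_ (integrable_const C) ?_
  · refine Eventually.of_forall fun t => ?_
    exact (gJ_measurable2 hD hf c t).stronglyMeasurable.integral_prod_left'.aestronglyMeasurable
  · filter_upwards [eventually_ge_atTop 2] with t ht
    exact Eventually.of_forall fun ω => hC t ht ω
  · exact Eventually.of_forall hl

theorem J_limit_eval {k : ℕ} (hk : 1 ≤ k) (g : ℕ → ℝ → ℝ) (hd : ∀ j s, HasDerivAt (g j) (g (j+1) s) s) (hs : ∀ j s, 1 < |s| → g j s = 0)
    (c c1 : ℝ) : ∫ p : ℝ × Eu (2*k), 2 * c * g (k+1) (p.1 + ‖p.2‖^2/2) * (c1 * g (2*k+1) p.1) =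
      2 * c * c1 * (2*Real.pi)^k * ∫ s, (g (k+1) s)^2 := by
  have hc : ∀ j, Continuous (g j) := fun j => continuous_iff_continuousAt.2 fun s => (hd j s).continuousAt
  have hI : Integrable fun p : ℝ × Eu (2*k) => 2 * c * g (k+1) (p.1 + ‖p.2‖^2/2) * (c1 * g (2*k+1) p.1) := by
    have h1 := hc (k+1)
    have h2 := hc (2*k+1)
    refine Continuous.integrable_of_hasCompactSupport (by fun_prop) ?_
    refine HasCompactSupport.intro (isCompact_Icc.prod (isCompact_closedBall _ _) : IsCompact (Icc (-1:ℝ) 1 ×ˢ closedBall (0 : Eu (2*k)) 2)) ?_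
    intro p hp
    by_cases a1 : 1 < |p.1|
    · rw [hs _ _ a1]; ring
    have a1' := abs_le.1 (not_lt.1 a1)
    have a2 : 2 < ‖p.2‖ := by
      by_contra h
      exact hp ⟨a1', by simpa using h⟩
    have a3 : 1 < |p.1 + ‖p.2‖^2/2| := by
      rw [lt_abs]; left; nlinarith
    rw [hs _ _ a3]; ring
  have e1 := integral_prod _ hI
  rw [show (volume : Measure (ℝ × Eu (2*k))) = (volume : Measure ℝ).prod volume from rfl, e1]
  have e2 : ∀ s : ℝ, ∫ z : Eu (2*k), 2 * c * g (k+1) (s + ‖z‖^2/2) * (c1 * g (2*k+1) s) = 2 * c * c1 * (-(2*Real.pi))^k * (g (k+1+k) s * g 1 s) := by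
    intro s
    rw [integral_mul_const, integral_const_mul, gauss_id g hd hs 1 s k hk, show k+1+k = 2*k+1 by ring]
    ring
  simp only [e2]
  rw [integral_const_mul, parts_id g hd hs]
  have e3 : ∫ s, g (k+1) s * g (1+k) s = ∫ s, (g (k+1) s)^2 := by
    congr 1; ext s; rw [add_comm 1 k]; ring
  rw [e3, neg_pow (2*Real.pi)]
  have e4 : (-1:ℝ)^k * (-1)^k = 1 := by rw [← mul_pow]; norm_num
  linear_combination (2 * c * c1 * (2*Real.pi)^k * ∫ s, (g (k+1) s)^2) * e4

theorem cross_eq {k : ℕ} {D f : ℝ → Sp (2*k+1) → ℝ} (hD : Continuous fun p : ℝ × Sp (2*k+1) => D p.1 p.2)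
    (hf : Continuous fun p : ℝ × Sp (2*k+1) => f p.1 p.2)
    (hsD : ∀ s ω, 1 < |s| → D s ω = 0) (hsf : ∀ s ω, 1 < |s| → f s ω = 0) (c t : ℝ) (ht : 2 ≤ t)
    (a : Eu (2*k+1) → ℝ) (g : Fin (2*k+1) → Eu (2*k+1) → ℝ)
    (ha : ∀ x, a x = - ∫ ω : Sp (2*k+1), f (⟪x, (ω : Eu (2*k+1))⟫ - t) ω ∂(sg (2*k+1)))
    (hg : ∀ x j, g j x = ∫ ω : Sp (2*k+1), (ω : Eu (2*k+1)) j * f (⟪x, (ω : Eu (2*k+1))⟫ - t) ω ∂(sg (2*k+1))) :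
    Integrable (fun x => bb D c t x * (a x - ∑ j, (pr x : Eu (2*k+1)) j * g j x)) ∧
    ∫ x, bb D c t x * (a x - ∑ j, (pr x : Eu (2*k+1)) j * g j x) = - ∫ ω : Sp (2*k+1), (∫ x, gJ D f c t ω x) ∂(sg (2*k+1)) := by
  obtain ⟨M, hM0, hM⟩ := sup_bound hD hsD
  obtain ⟨M', hM0', hM'⟩ := sup_bound hf hsf
  have hI : Integrable (fun p : Eu (2*k+1) × Sp (2*k+1) => gJ D f c t p.2 p.1) ((volume : Measure (Eu (2*k+1))).prod (sg (2*k+1))) := by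
    have h1 : IntegrableOn (fun p : Eu (2*k+1) × Sp (2*k+1) => gJ D f c t p.2 p.1) (closedBall 0 (t+1) ×ˢ univ) ((volume : Measure (Eu (2*k+1))).prod (sg (2*k+1))) := by
      refine Measure.integrableOn_of_bounded (M := |c| * M * 2 * M') ?_ (gJ_measurable2 hD hf c t).aestronglyMeasurable
        (Eventually.of_forall fun p => gJ_bound hsD hM0 hM hM0' hM' c t ht p.2 p.1)
      rw [Measure.prod_prod]
      exact ENNReal.mul_ne_top measure_closedBall_lt_top.ne (measure_ne_top _ _)
    rw [integrableOn_iff_integrable_of_support_subset] at h1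
    · exact h1
    · intro p hp
      by_contra h
      refine hp (gJ_zero hsD c t p.2 p.1 ?_)
      by_contra h'
      exact h ⟨by simpa using h', mem_univ _⟩
  have hpt : ∀ x, bb D c t x * (a x - ∑ j, (pr x : Eu (2*k+1)) j * g j x) = - ∫ ω : Sp (2*k+1), gJ D f c t ω x ∂(sg (2*k+1)) := by
    intro x
    have hfc : Continuous fun ω : Sp (2*k+1) => f (⟪x, (ω : Eu (2*k+1))⟫ - t) ω := cont_comp2 hf (by fun_prop) (by fun_prop)
    have hcj : ∀ j : Fin (2*k+1), Continuous fun ω : Sp (2*k+1) => (ω : Eu (2*k+1)) j := fun j => by fun_prop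
    have e1 : ∀ ω : Sp (2*k+1), gJ D f c t ω x = bb D c t x * (f (⟪x, (ω : Eu (2*k+1))⟫ - t) ω + ∑ j, (pr x : Eu (2*k+1)) j * ((ω : Eu (2*k+1)) j * f (⟪x, (ω : Eu (2*k+1))⟫ - t) ω)) := by
      intro ω
      unfold gJ
      have : ⟪(pr x : Eu (2*k+1)), (ω : Eu (2*k+1))⟫ = ∑ j, (pr x : Eu (2*k+1)) j * (ω : Eu (2*k+1)) j := by
        rw [PiLp.inner_apply]
        refine Finset.sum_congr rfl fun j _ => ?_
        simp [mul_comm]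
      rw [this, mul_assoc, add_mul, one_mul, Finset.sum_mul]
      congr 2
      refine Finset.sum_congr rfl fun j _ => ?_
      ring
    simp only [e1]
    have i1 : ∀ j, Integrable (fun ω : Sp (2*k+1) => (pr x : Eu (2*k+1)) j * ((ω : Eu (2*k+1)) j * f (⟪x, (ω : Eu (2*k+1))⟫ - t) ω)) (sg (2*k+1)) :=
      fun j => sp_int (continuous_const.mul ((hcj j).mul hfc))
    rw [integral_const_mul, integral_add (sp_int hfc) (integrable_finsetSum _ fun j _ => i1 j), integral_finsetSum _ fun j _ => i1 j]
    simp only [integral_const_mul, ← hg]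
    rw [ha]
    ring
  simp only [hpt]
  constructor
  · exact hI.integral_prod_left.neg
  · rw [integral_neg, integral_integral_swap hI]

end Pairing2

section Final
open scoped RealInnerProductSpace

theorem sum_pr_sq {k : ℕ} (ω : Sp (2*k+1)) : ∑ j, (ω : Eu (2*k+1)) j ^ 2 = 1 := by
  have h1 : ‖(ω : Eu (2*k+1))‖ = 1 := norm_eq_of_mem_sphere ω
  have h2 := EuclideanSpace.norm_sq_eq (ω : Eu (2*k+1))
  rw [h1] at h2
  simpa using h2.symm

theorem quad_nonneg {n : ℕ} (a b : ℝ) (g p : Fin n → ℝ) (hp : ∑ j, p j ^ 2 = 1) (μ : ℝ) :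
    0 ≤ (a^2 + ∑ j, (g j)^2) - 2 * μ * (b * (a - ∑ j, p j * g j)) + 2 * μ^2 * b^2 := by
  have h1 : ∑ j, (g j + μ * b * p j)^2 = ∑ j, (g j)^2 + 2 * μ * b * ∑ j, p j * g j + (μ*b)^2 * ∑ j, p j ^ 2 := by
    rw [Finset.mul_sum, Finset.mul_sum, ← Finset.sum_add_distrib, ← Finset.sum_add_distrib]
    refine Finset.sum_congr rfl fun j _ => ?_
    ring
  have h2 : 0 ≤ ∑ j, (g j + μ * b * p j)^2 := Finset.sum_nonneg fun j _ => sq_nonneg _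
  rw [hp] at h1
  nlinarith [sq_nonneg (a - μ * b)]

theorem quad_abs {P Y B δ : ℝ} (hδ : 0 < δ) (h : ∀ μ : ℝ, 0 ≤ P - 2 * μ * Y + 2 * μ^2 * B) :
    |P - 2 * B| ≤ (1 + 1/δ) * (P - 2 * Y + 2 * B) + 2 * δ * B := by
  have h0 := h 1
  have h1 := h (1 - δ)
  have h2 := h (1 + δ)
  have e1 : 1/δ * ((P - 2 * Y + 2 * B) + 2 * δ * (Y - 2*B) + 2 * δ^2 * B) = 1/δ * (P - 2 * Y + 2 * B) + 2 * (Y - 2*B) + 2 * δ * B := by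
    field_simp
  have e2 : 1/δ * ((P - 2 * Y + 2 * B) - 2 * δ * (Y - 2*B) + 2 * δ^2 * B) = 1/δ * (P - 2 * Y + 2 * B) - 2 * (Y - 2*B) + 2 * δ * B := by
    field_simp
  have n1 : 0 ≤ 1/δ * ((P - 2 * Y + 2 * B) + 2 * δ * (Y - 2*B) + 2 * δ^2 * B) := mul_nonneg (by positivity) (by nlinarith)
  have n2 : 0 ≤ 1/δ * ((P - 2 * Y + 2 * B) - 2 * δ * (Y - 2*B) + 2 * δ^2 * B) := mul_nonneg (by positivity) (by nlinarith)
  rw [e1] at n1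
  rw [e2] at n2
  rw [abs_le]
  constructor <;> nlinarith

theorem eps_lemma (F e : ℝ → ℝ) (A L : ℝ) (hA : 0 ≤ A) (he : Tendsto e atTop (nhds 0))
    (h : ∀ δ, 0 < δ → ∀ t, 3 ≤ t → |F t - L| ≤ (1 + 1/δ) * e t + δ * A) : Tendsto F atTop (nhds L) := by
  rw [Metric.tendsto_nhds]
  intro ε hε
  set δ := ε / (2 * (A+1)) with hδ
  have hδ0 : 0 < δ := by positivity
  have h1 : Tendsto (fun t => (1 + 1/δ) * e t) atTop (nhds 0) := by
    simpa using he.const_mul (1 + 1/δ)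
  have h2 : δ * A < ε / 2 := by
    have : δ * (2 * (A+1)) = ε := by rw [hδ]; field_simp
    nlinarith
  filter_upwards [h1.eventually (gt_mem_nhds (half_pos hε)), eventually_ge_atTop 3] with t h3 h4
  rw [Real.dist_eq]
  have := h δ hδ0 t h4
  linarith

theorem ext_limit {k : ℕ} (hk : 1 ≤ k) (u₀ : Eu (2*k+1) → ℝ)
    (hu₀ : ContDiff ℝ (⊤ : ℕ∞) u₀) (hu₀c : HasCompactSupport u₀)
    (hu₀s : Function.support u₀ ⊆ Metric.closedBall 0 1)
    (u : ℝ → Eu (2*k+1) → ℝ)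
    (hu : ContDiff ℝ (⊤ : ℕ∞) (fun p : ℝ × Eu (2*k+1) => u p.1 p.2))
    (hwave : ∀ t x, deriv (fun s => deriv (fun r => u r x) s) t = ∑ j, d2 (u t) j x)
    (hinit0 : ∀ x, u 0 x = u₀ x)
    (hinit1 : ∀ x, deriv (fun s => u s x) 0 = 0) :
    Tendsto (fun t : ℝ =>
        (1 / 2) * ∫ x in {x : Eu (2*k+1) | |t| ≤ ‖x‖},
          (‖gradient (u t) x‖ ^ 2 + (deriv (fun s => u s x) t) ^ 2))
      atTop (nhds ((1 / 4) * ∫ x, ‖gradient u₀ x‖ ^ 2)) := by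
  obtain ⟨R, hR1, hR2, hR3, hR4, hR5, hR6⟩ := radon_data u₀ hu₀ hu₀c hu₀s
  set A := ∫ x, ‖gradient u₀ x‖ ^ 2 with hAdef
  have hA : 0 ≤ A := integral_nonneg fun x => by positivity
  have hpi : (0:ℝ) < 2 * Real.pi := by positivity
  have hsgn : ((-1:ℝ)^k)^2 = 1 := by rw [← pow_mul, mul_comm, pow_mul]; norm_num
  have hsgn0 : (-1:ℝ)^k ≠ 0 := by positivity
  set q := (2*Real.pi)^k with hq
  have hq0 : 0 < q := by positivity
  have hq2 : (2*Real.pi)^(2*k) = q^2 := by rw [hq, ← pow_mul, mul_comm k 2]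
  set c1 : ℝ := (2 * (2*Real.pi)^(2*k) * (-1)^k)⁻¹ with hc1def
  have hc1 : c1 * (2 * (2*Real.pi)^(2*k) * (-1)^k) = 1 := inv_mul_cancel₀ (by positivity)
  set c2 : ℝ := -(1/2) * (-1)^k / q with hc2def
  have hc2sq : c2^2 * (2 * (2*Real.pi)^(2*k) * A) = A / 2 := by
    rw [hc2def, hq2, div_pow, mul_pow, hsgn]; field_simp
  have hc12 : 2 * c2 * c1 * q * (2 * (2*Real.pi)^(2*k) * A) = -A := by
    rw [hc2def, hc1def, hq2]; field_simp
  have hrep := fun t ht => wave_plane_rep u₀ hu₀ hu₀c u hu hwave hinit0 hinit1 R hR1 hR2 hR4 hR5 c1 hc1 t ht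
  have cD := hR1 (k+1)
  have sD := hR3 (k+1)
  have cf : Continuous fun p : ℝ × Sp (2*k+1) => (fun s ω => c1 * R (2*k+1) s ω) p.1 p.2 := continuous_const.mul (hR1 (2*k+1))
  have sf : ∀ s ω, 1 < |s| → (fun s ω => c1 * R (2*k+1) s ω) s ω = 0 := fun s ω h => by simp [hR3 _ _ _ h]
  have hJ := J_int_tendsto cD cf sD sf c2
  have hev : ∀ ω : Sp (2*k+1), ∫ p : ℝ × Eu (2*k), 2 * c2 * R (k+1) (p.1 + ‖p.2‖^2/2) ω * (c1 * R (2*k+1) p.1 ω) = 2 * c2 * c1 * q * ∫ s, (R (k+1) s ω)^2 :=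
    fun ω => J_limit_eval hk (fun j s => R j s ω) (fun j s => hR2 j s ω) (fun j s h => hR3 j s ω h) c2 c1
  simp only [hev] at hJ
  rw [integral_const_mul, hR6, hc12] at hJ
  set J : ℝ → ℝ := fun t => ∫ ω : Sp (2*k+1), (∫ x, gJ (R (k+1)) (fun s ω => c1 * R (2*k+1) s ω) c2 t ω x) ∂(sg (2*k+1)) with hJdef
  have he : Tendsto (fun t => 2 * A + 2 * J t) atTop (nhds 0) := by
    have := (hJ.const_mul 2).const_add (2*A)
    simpa using this
  have hmain : Tendsto (fun t : ℝ => ∫ x in {x : Eu (2*k+1) | |t| ≤ ‖x‖},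
          (‖gradient (u t) x‖ ^ 2 + (deriv (fun s => u s x) t) ^ 2)) atTop (nhds (A/2)) := by
    refine eps_lemma _ _ A _ hA he ?_
    intro δ hδ t ht
    rw [abs_of_nonneg (by linarith : (0:ℝ) ≤ t)]
    obtain ⟨ra, rg, rI, rE⟩ := hrep t (by linarith)
    obtain ⟨cI, cE⟩ := cross_eq cD cf sD sf c2 t (by linarith) (fun x => deriv (fun s => u s x) t)
      (fun j x => fderiv ℝ (u t) x (EuclideanSpace.single j 1)) ra rg
    have bI := bb_sq_integrable cD sD c2 t (by linarith)
    have bE := bb_energy_full cD sD c2 t ht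
    have bX := bb_energy_ext cD sD (fun s ω => by
      rw [hR4, mul_pow, ← pow_mul, mul_comm (k+1) 2, pow_mul]; norm_num) c2 t ht
    rw [hR6, hc2sq] at bE
    rw [hR6, show c2^2 * (1/2 * (2 * (2*Real.pi)^(2*k) * A)) = (1/2) * (c2^2 * (2 * (2*Real.pi)^(2*k) * A)) by ring, hc2sq] at bX
    set P : Eu (2*k+1) → ℝ := fun x => (deriv (fun s => u s x) t)^2 + ∑ j, (fderiv ℝ (u t) x (EuclideanSpace.single j 1))^2 with hP
    set Y : Eu (2*k+1) → ℝ := fun x => bb (R (k+1)) c2 t x * (deriv (fun s => u s x) t - ∑ j, (pr x : Eu (2*k+1)) j * fderiv ℝ (u t) x (EuclideanSpace.single j 1)) with hY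
    set B : Eu (2*k+1) → ℝ := fun x => (bb (R (k+1)) c2 t x)^2 with hB
    have eP : ∀ x, ‖gradient (u t) x‖ ^ 2 + (deriv (fun s => u s x) t) ^ 2 = P x := by
      intro x; rw [grad_sq, hP]; ring
    simp only [eP]
    have hq : ∀ x (μ : ℝ), 0 ≤ P x - 2 * μ * Y x + 2 * μ^2 * B x := fun x μ =>
      quad_nonneg _ _ _ _ (sum_pr_sq (pr x)) μ
    set S := {x : Eu (2*k+1) | t ≤ ‖x‖} with hS
    have hZI : Integrable fun x => P x - 2 * Y x + 2 * B x := (rI.sub (cI.const_mul 2)).add (bI.const_mul 2)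
    have hGI : Integrable fun x => (1 + 1/δ) * (P x - 2 * Y x + 2 * B x) + 2 * δ * B x := (hZI.const_mul _).add (bI.const_mul _)
    have hZ : ∫ x, (P x - 2 * Y x + 2 * B x) ≤ 2 * A + 2 * J t := by
      have i1 : Integrable fun x => P x - 2 * Y x := rI.sub (cI.const_mul 2)
      rw [integral_add i1 (bI.const_mul 2), integral_sub rI (cI.const_mul 2), integral_const_mul, integral_const_mul, bE, cE]
      linarith
    have e1' : (∫ x in S, P x) - A/2 = ∫ x in S, (P x - 2 * B x) := by
      rw [integral_sub rI.integrableOn (bI.const_mul 2).integrableOn, integral_const_mul, bX]; ring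
    rw [e1']
    calc |∫ x in S, (P x - 2 * B x)| ≤ ∫ x in S, |P x - 2 * B x| := abs_integral_le_integral_abs
      _ ≤ ∫ x in S, ((1 + 1/δ) * (P x - 2 * Y x + 2 * B x) + 2 * δ * B x) :=
          integral_mono (rI.sub (bI.const_mul 2)).abs.integrableOn hGI.integrableOn fun x => quad_abs hδ (hq x)
      _ ≤ ∫ x, ((1 + 1/δ) * (P x - 2 * Y x + 2 * B x) + 2 * δ * B x) :=
          setIntegral_le_integral hGI (Eventually.of_forall fun x => le_trans (abs_nonneg _) (quad_abs hδ (hq x)))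
      _ = (1 + 1/δ) * (∫ x, (P x - 2 * Y x + 2 * B x)) + 2 * δ * (A/2) := by
          rw [integral_add (hZI.const_mul _) (bI.const_mul _), integral_const_mul, integral_const_mul, bE]
      _ ≤ (1 + 1/δ) * (2 * A + 2 * J t) + δ * A := by
          have : 0 ≤ 1 + 1/δ := by positivity
          have := mul_le_mul_of_nonneg_left hZ this
          linarith
  have := hmain.const_mul (1/2)
  rw [show 1/2 * (A/2) = 1/4 * A by ring] at this
  exact this

theorem stmt12_core (N : ℕ) (hN : 3 ≤ N) (hodd : Odd N)
    (u₀ : EuclideanSpace ℝ (Fin N) → ℝ)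
    (hu₀ : ContDiff ℝ (⊤ : ℕ∞) u₀) (hu₀c : HasCompactSupport u₀)
    (hu₀s : Function.support u₀ ⊆ Metric.closedBall 0 1)
    (u : ℝ → EuclideanSpace ℝ (Fin N) → ℝ)
    (hu : ContDiff ℝ (⊤ : ℕ∞) (fun p : ℝ × EuclideanSpace ℝ (Fin N) => u p.1 p.2))
    (hwave : ∀ t x, deriv (fun s => deriv (fun r => u r x) s) t = ∑ j, d2 (u t) j x)
    (hinit0 : ∀ x, u 0 x = u₀ x)
    (hinit1 : ∀ x, deriv (fun s => u s x) 0 = 0) :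
    Tendsto (fun t : ℝ =>
        (1 / 2) * ∫ x in {x : EuclideanSpace ℝ (Fin N) | |t| ≤ ‖x‖},
          (‖gradient (u t) x‖ ^ 2 + (deriv (fun s => u s x) t) ^ 2))
      atTop (nhds ((1 / 4) * ∫ x, ‖gradient u₀ x‖ ^ 2))
    ∧ Tendsto (fun t : ℝ =>
        (1 / 2) * ∫ x in {x : EuclideanSpace ℝ (Fin N) | |t| ≤ ‖x‖},
          (‖gradient (u t) x‖ ^ 2 + (deriv (fun s => u s x) t) ^ 2))
      atBot (nhds ((1 / 4) * ∫ x, ‖gradient u₀ x‖ ^ 2)) := by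
  obtain ⟨k, rfl⟩ := hodd
  have hk : 1 ≤ k := by omega
  refine ⟨ext_limit hk u₀ hu₀ hu₀c hu₀s u hu hwave hinit0 hinit1, ?_⟩
  have hd : ∀ x s, deriv (fun r => u (-r) x) s = - deriv (fun r => u r x) (-s) := fun x s =>
    deriv_comp_neg (fun r => u r x) s
  have h := ext_limit hk u₀ hu₀ hu₀c hu₀s (fun t x => u (-t) x)
    (hu.comp (contDiff_fst.neg.prodMk contDiff_snd)) (by
      intro t x
      simp only [hd]
      rw [deriv.fun_neg, deriv_comp_neg (fun s => deriv (fun r => u r x) s) t, neg_neg]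
      exact hwave (-t) x) (by simpa using hinit0) (by intro x; rw [hd, neg_zero, hinit1, neg_zero])
  have h2 := h.comp tendsto_neg_atBot_atTop
  refine h2.congr fun t => ?_
  simp only [Function.comp, hd, neg_neg, abs_neg, neg_sq]

end Final

/-- Lemma 2.8, first identity: for data `(u₀, 0)` supported in the unit ball, the
exterior energy converges to one quarter of `∫|∇u₀|²` at `±∞`. -/
theorem stmt12 (N : ℕ) (hN : 3 ≤ N) (hodd : Odd N)
    (u₀ : EuclideanSpace ℝ (Fin N) → ℝ)
    (hu₀ : ContDiff ℝ (⊤ : ℕ∞) u₀) (hu₀c : HasCompactSupport u₀)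
    (hu₀s : Function.support u₀ ⊆ Metric.closedBall 0 1)
    (u : ℝ → EuclideanSpace ℝ (Fin N) → ℝ)
    (hu : ContDiff ℝ (⊤ : ℕ∞) (fun p : ℝ × EuclideanSpace ℝ (Fin N) => u p.1 p.2))
    (hwave : ∀ t x, deriv (fun s => deriv (fun r => u r x) s) t = ∑ j, d2 (u t) j x)
    (hinit0 : ∀ x, u 0 x = u₀ x)
    (hinit1 : ∀ x, deriv (fun s => u s x) 0 = 0) :
    Tendsto (fun t : ℝ =>
        (1 / 2) * ∫ x in {x : EuclideanSpace ℝ (Fin N) | |t| ≤ ‖x‖},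
          (‖gradient (u t) x‖ ^ 2 + (deriv (fun s => u s x) t) ^ 2))
      atTop (nhds ((1 / 4) * ∫ x, ‖gradient u₀ x‖ ^ 2))
    ∧ Tendsto (fun t : ℝ =>
        (1 / 2) * ∫ x in {x : EuclideanSpace ℝ (Fin N) | |t| ≤ ‖x‖},
          (‖gradient (u t) x‖ ^ 2 + (deriv (fun s => u s x) t) ^ 2))
      atBot (nhds ((1 / 4) * ∫ x, ‖gradient u₀ x‖ ^ 2)) := by
  exact stmt12_core N hN hodd u₀ hu₀ hu₀c hu₀s u hu hwave hinit0 hinit1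

end
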